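/- arXiv:2603.26061 — 10 statements merged into one kernel-verified Lean document; each statement's English description precedes it below -/
import Mathlib

section
/- Let φ be an N-function that is piecewise twice differentiable in the sense that φ ∈ W^{2,∞}_loc((0,∞)). If there exist constants 0 < c ≤ C < ∞ with c ≤ φ''(t)t/φ'(t) ≤ C for almost all t > 0, then φ is uniformly convex, i.e. there exist constants 0 < c₁ ≤ C₁ < ∞ such that c₁ φ'(s)/s ≤ (φ'(t) − φ'(s))/(t − s) ≤ C₁ φ'(s)/s for all 0 ≤ t < s. -/
open Filter MeasureTheory Set Topology

noncomputable section

/-- `φ : [0,∞) → [0,∞)` is an N-function with right-continuous non-decreasing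
derivative `φ'`. -/
structure IsNFunction (φ φ' : ℝ → ℝ) : Prop where
  continuousOn : ContinuousOn φ (Set.Ici 0)
  convexOn : ConvexOn ℝ (Set.Ici 0) φ
  deriv_nonneg : ∀ t : ℝ, 0 ≤ t → 0 ≤ φ' t
  deriv_monotoneOn : MonotoneOn φ' (Set.Ici 0)
  deriv_rightContinuous : ∀ t : ℝ, 0 ≤ t →
    Filter.Tendsto φ' (nhdsWithin t (Set.Ioi t)) (nhds (φ' t))
  deriv_zero : φ' 0 = 0
  deriv_pos : ∀ t : ℝ, 0 < t → 0 < φ' t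
  deriv_tendsto_atTop : Filter.Tendsto φ' Filter.atTop Filter.atTop
  eq_integral : ∀ t : ℝ, 0 ≤ t → φ t = ∫ s in (0:ℝ)..t, φ' s

/-- Fenchel conjugate `φ*(r) = sup_{s ≥ 0} (r s − φ(s))`. -/
def fenchelConj (φ : ℝ → ℝ) (r : ℝ) : ℝ :=
  sSup {x : ℝ | ∃ s : ℝ, 0 ≤ s ∧ x = r * s - φ s}

/-- Right-continuous inverse `(φ')⁻¹(t) = sup {r ≥ 0 : φ'(r) ≤ t}`. -/
def rcInv (φ' : ℝ → ℝ) (t : ℝ) : ℝ :=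
  sSup {r : ℝ | 0 ≤ r ∧ φ' r ≤ t}

theorem aux_mono (f f2 : ℝ → ℝ) (σ p a b : ℝ) (ha : 0 < a) (hab : a ≤ b)
    (hlip : ∃ K : NNReal, LipschitzOnWith K f (Set.Icc a b))
    (hderiv : ∀ᵐ t ∂(volume.restrict (Set.Ioi (0:ℝ))), HasDerivAt f (f2 t) t)
    (hs : ∀ᵐ t ∂(volume.restrict (Set.Ioi (0:ℝ))), 0 ≤ σ * (f2 t * t - p * f t)) :
    σ * (f a * a ^ (-p)) ≤ σ * (f b * b ^ (-p)) := by
  obtain ⟨K, hK⟩ := hlip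
  have h1 : AbsolutelyContinuousOnInterval f a b :=
    LipschitzOnWith.absolutelyContinuousOnInterval (by rw [uIcc_of_le hab]; exact hK)
  have hg : ContDiffOn ℝ 1 (fun x : ℝ => x ^ (-p)) (Icc a b) := by
    intro x hx
    exact (Real.contDiffAt_rpow_const_of_ne (by linarith [hx.1])).contDiffWithinAt
  obtain ⟨K2, hK2⟩ := (hg.locallyLipschitzOn (convex_Icc a b)).exists_lipschitzOnWith_of_compact
    isCompact_Icc
  have h2 : AbsolutelyContinuousOnInterval (fun x : ℝ => x ^ (-p)) a b :=
    LipschitzOnWith.absolutelyContinuousOnInterval (by rw [uIcc_of_le hab]; exact hK2)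
  have h3 := ((h1.fun_mul h2).const_mul σ).integral_deriv_eq_sub
  have h4 : 0 ≤ ∫ x in a..b, deriv (fun x => σ * (f x * x ^ (-p))) x := by
    apply intervalIntegral.integral_nonneg_of_ae_restrict hab
    have hsub : Icc a b ⊆ Ioi 0 := fun x hx => lt_of_lt_of_le ha hx.1
    filter_upwards [ae_restrict_of_ae_restrict_of_subset hsub hderiv,
      ae_restrict_of_ae_restrict_of_subset hsub hs, ae_restrict_mem measurableSet_Icc]
      with x hx1 hx2 hx3
    have hx0 : 0 < x := hsub hx3
    have hd := (hx1.mul (Real.hasDerivAt_rpow_const (p := -p) (Or.inl hx0.ne'))).const_mul σ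
    have hd' : deriv (fun x => σ * (f x * x ^ (-p))) x = _ := hd.deriv
    rw [hd']
    have e : x ^ (-p) = x ^ (-p - 1) * x := by
      rw [← Real.rpow_add_one hx0.ne']; congr 1; ring
    rw [e]
    have : 0 ≤ x ^ (-p - 1) := Real.rpow_nonneg hx0.le _
    have := mul_nonneg this hx2
    simp only [Pi.zero_apply]
    linarith
  have h5 : ∫ x in a..b, deriv (fun x => σ * (f x * x ^ (-p))) x
    = σ * (f b * b ^ (-p)) - σ * (f a * a ^ (-p)) := h3
  linarith

theorem aux_pow (x y t s p : ℝ) (ht : 0 < t) (hs : 0 < s) (h : x * t ^ (-p) ≤ y * s ^ (-p)) :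
    x ≤ y * (t / s) ^ p := by
  rw [Real.rpow_neg ht.le, Real.rpow_neg hs.le] at h
  rw [Real.div_rpow ht.le hs.le]
  have h1 := Real.rpow_pos_of_pos ht p
  rw [← div_eq_mul_inv, div_le_iff₀ h1] at h
  calc x ≤ _ := h
    _ = _ := by ring

theorem aux_pow' (x y t s p : ℝ) (ht : 0 < t) (hs : 0 < s) (h : y * s ^ (-p) ≤ x * t ^ (-p)) :
    y * (t / s) ^ p ≤ x := by
  rw [Real.rpow_neg ht.le, Real.rpow_neg hs.le] at h
  rw [Real.div_rpow ht.le hs.le]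
  have h1 := Real.rpow_pos_of_pos ht p
  rw [← div_eq_mul_inv x, le_div_iff₀ h1] at h
  calc _ = _ := by ring
    _ ≤ x := h

/-- if `φ ∈ W^{2,∞}_loc((0,∞))` (i.e. `φ'` is locally Lipschitz on
`(0,∞)` with a.e. derivative `φ''`) and `c ≤ φ''(t)t/φ'(t) ≤ C` a.e., then `φ`
is uniformly convex. -/
theorem uniformly_convex_of_second_deriv_bounds (φ φ' φ'' : ℝ → ℝ)
    (hφ : IsNFunction φ φ')
    (hlip : ∀ a b : ℝ, 0 < a → a ≤ b → ∃ K : NNReal, LipschitzOnWith K φ' (Set.Icc a b))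
    (hderiv : ∀ᵐ t ∂(volume.restrict (Set.Ioi (0:ℝ))), HasDerivAt φ' (φ'' t) t)
    (c C : ℝ) (hc : 0 < c) (hcC : c ≤ C)
    (hbound : ∀ᵐ t ∂(volume.restrict (Set.Ioi (0:ℝ))),
      c ≤ φ'' t * t / φ' t ∧ φ'' t * t / φ' t ≤ C) :
    ∃ c₁ C₁ : ℝ, 0 < c₁ ∧ c₁ ≤ C₁ ∧
      ∀ t s : ℝ, 0 ≤ t → t < s →
        c₁ * (φ' s / s) ≤ (φ' t - φ' s) / (t - s) ∧
        (φ' t - φ' s) / (t - s) ≤ C₁ * (φ' s / s) := by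
  have hsgn : ∀ᵐ t ∂(volume.restrict (Set.Ioi (0:ℝ))),
      0 ≤ (1:ℝ) * (φ'' t * t - c * φ' t) ∧ 0 ≤ (-1:ℝ) * (φ'' t * t - C * φ' t) := by
    filter_upwards [hbound, ae_restrict_mem measurableSet_Ioi] with t ht ht0
    have hp := hφ.deriv_pos t ht0
    rw [le_div_iff₀ hp, div_le_iff₀ hp] at ht
    constructor <;> linarith [ht.1, ht.2]
  refine ⟨min c 1, max C 1, lt_min hc one_pos, (min_le_right _ _).trans (le_max_right _ _), ?_⟩
  intro t s ht hts
  have hs : 0 < s := lt_of_le_of_lt ht hts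
  have hfs := hφ.deriv_pos s hs
  have key : min c 1 * (1 - t / s) * φ' s ≤ φ' s - φ' t ∧
      φ' s - φ' t ≤ max C 1 * (1 - t / s) * φ' s := by
    rcases ht.eq_or_lt with rfl | ht
    · rw [hφ.deriv_zero]
      have h1 := min_le_right c 1
      have h2 := le_max_right C 1
      constructor <;> simp only [zero_div, sub_zero, mul_one] <;> nlinarith
    · have hx0 : 0 < t / s := div_pos ht hs
      have hx1 : t / s < 1 := (div_lt_one hs).2 hts
      have hA := aux_pow _ _ t s c ht hs (by
        simpa using aux_mono φ' φ'' 1 c t s ht hts.le (hlip t s ht hts.le) hderiv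
          (hsgn.mono fun _ h => h.1))
      have hB := aux_pow' (φ' t) (φ' s) t s C ht hs (by
        simpa using aux_mono φ' φ'' (-1) C t s ht hts.le (hlip t s ht hts.le) hderiv
          (hsgn.mono fun _ h => h.2))
      generalize t / s = x at *
      have hA' : min c 1 * (1 - x) ≤ 1 - x ^ c := by
        rcases le_total c 1 with h | h
        · rw [min_eq_left h]
          have := rpow_one_add_le_one_add_mul_self (s := x - 1) (by linarith) hc.le h
          rw [add_sub_cancel] at this
          linarith
        · rw [min_eq_right h]
          have := Real.rpow_le_rpow_of_exponent_ge hx0 hx1.le h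
          rw [Real.rpow_one] at this
          linarith
      have hB' : 1 - x ^ C ≤ max C 1 * (1 - x) := by
        rcases le_total C 1 with h | h
        · rw [max_eq_right h]
          have := Real.rpow_le_rpow_of_exponent_ge hx0 hx1.le h
          rw [Real.rpow_one] at this
          linarith
        · rw [max_eq_left h]
          have := one_add_mul_self_le_rpow_one_add (s := x - 1) (by linarith) h
          rw [add_sub_cancel] at this
          linarith
      have := mul_le_mul_of_nonneg_right hA' hfs.le
      have := mul_le_mul_of_nonneg_right hB' hfs.le
      constructor <;> linarith
  have hd : 0 < s - t := by linarith
  rw [← neg_div_neg_eq (φ' t - φ' s), neg_sub, neg_sub]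
  rw [le_div_iff₀ hd, div_le_iff₀ hd]
  have e : ∀ k : ℝ, k * (φ' s / s) * (s - t) = k * (1 - t / s) * φ' s := by
    intro k; field_simp
  rw [e, e]
  exact key
end
end

section
/- Let φ be an N-function, let B: ℝᴺ → ℝᴹ be linear, V₀ ⊆ ℝᴺ a linear subspace with ker(B) ∩ V₀ = {0}, g ∈ ℝᴺ, f ∈ ℝᴺ, and positive weights w ∈ (0,∞)ᴹ. Let u_g = u + g where u minimizes v ↦ J(v+g) over V₀, and let σ minimize J* over Σ_f. Then J(u_g) + f·g = min_{v∈V₀} J(v+g) + f·g = − min_{τ∈Σ_f} J*(τ) = −J*(σ). -/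
open Filter MeasureTheory Set Topology

noncomputable section

/-- `A_ψ(t) = (ψ(|t|)/|t|)·t` for `t ≠ 0` and `A_ψ(0) = 0`. -/
def Aphi (ψ : ℝ → ℝ) (t : ℝ) : ℝ := if t = 0 then 0 else ψ (|t|) / |t| * t

/-- `V_ψ(t) = sqrt(ψ(|t|)/|t|)·t` for `t ≠ 0` and `V_ψ(0) = 0`. -/
def Vphi (ψ : ℝ → ℝ) (t : ℝ) : ℝ := if t = 0 then 0 else Real.sqrt (ψ (|t|) / |t|) * t

/-- Primal energy `J(v) = Σ_α w_α φ(|(Bv)_α|) − f·v`. -/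
def primalJ {N M : ℕ} (w : Fin M → ℝ) (φ : ℝ → ℝ)
    (B : (Fin N → ℝ) →ₗ[ℝ] (Fin M → ℝ)) (f v : Fin N → ℝ) : ℝ :=
  (∑ α, w α * φ (|B v α|)) - ∑ i, f i * v i

/-- Dual energy `J*(τ) = Σ_α w_α ψ(w_α⁻¹|τ_α|) − τᵀ(Bg)` with dual integrand `ψ`. -/
def dualJ {N M : ℕ} (w : Fin M → ℝ) (ψ : ℝ → ℝ)
    (B : (Fin N → ℝ) →ₗ[ℝ] (Fin M → ℝ)) (g : Fin N → ℝ) (τ : Fin M → ℝ) : ℝ :=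
  (∑ α, w α * ψ ((w α)⁻¹ * |τ α|)) - ∑ α, τ α * B g α

/-- Dual constraint set `Σ_f = {τ : τᵀ(Bv) = f·v for all v ∈ V₀}`. -/
def SigmaF {N M : ℕ} (B : (Fin N → ℝ) →ₗ[ℝ] (Fin M → ℝ))
    (V₀ : Submodule ℝ (Fin N → ℝ)) (f : Fin N → ℝ) : Set (Fin M → ℝ) :=
  {τ | ∀ v ∈ V₀, (∑ α, τ α * B v α) = ∑ i, f i * v i}

lemma nf_int {φ φ' : ℝ → ℝ} (h : IsNFunction φ φ') {a b : ℝ} (ha : 0 ≤ a) (hb : 0 ≤ b) :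
    IntervalIntegrable φ' volume a b := by
  apply MonotoneOn.intervalIntegrable
  apply h.deriv_monotoneOn.mono
  intro x hx
  have : min a b ≤ x := hx.1
  exact le_trans (le_min ha hb) this

lemma nf_sub {φ φ' : ℝ → ℝ} (h : IsNFunction φ φ') {a b : ℝ} (ha : 0 ≤ a) (hab : a ≤ b) :
    (b - a) * φ' a ≤ φ b - φ a := by
  have hb := ha.trans hab
  rw [h.eq_integral a ha, h.eq_integral b hb,
    intervalIntegral.integral_interval_sub_left (nf_int h le_rfl hb) (nf_int h le_rfl ha)]
  have h1 : (∫ _ in a..b, φ' a) ≤ ∫ s in a..b, φ' s := by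
    apply intervalIntegral.integral_mono_on hab (by simp) (nf_int h ha hb)
    intro x hx
    exact h.deriv_monotoneOn ha (ha.trans hx.1) hx.1
  simpa using h1

lemma nf_mono {φ φ' : ℝ → ℝ} (h : IsNFunction φ φ') : MonotoneOn φ (Set.Ici 0) := by
  intro a ha b hb hab
  have := nf_sub h ha hab
  have := mul_nonneg (sub_nonneg.2 hab) (h.deriv_nonneg a ha)
  linarith

lemma nf_nonneg {φ φ' : ℝ → ℝ} (h : IsNFunction φ φ') {a : ℝ} (ha : 0 ≤ a) : 0 ≤ φ a := by
  have h0 : φ 0 = 0 := by simpa using h.eq_integral 0 le_rfl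
  have := nf_mono h (Set.mem_Ici.2 le_rfl) (Set.mem_Ici.2 ha) ha
  linarith

lemma nf_bdd {φ φ' : ℝ → ℝ} (h : IsNFunction φ φ') (r : ℝ) :
    BddAbove {x : ℝ | ∃ s : ℝ, 0 ≤ s ∧ x = r * s - φ s} := by
  obtain ⟨T, hT, hT0⟩ := ((h.deriv_tendsto_atTop.eventually_ge_atTop r).and
    (eventually_ge_atTop 0)).exists
  refine ⟨|r| * T, ?_⟩
  rintro x ⟨s, hs, rfl⟩
  have hr := le_abs_self r
  rcases le_total s T with hsT | hsT
  · have := nf_nonneg h hs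
    have h1 : r * s ≤ |r| * s := mul_le_mul_of_nonneg_right hr hs
    have h2 : |r| * s ≤ |r| * T := mul_le_mul_of_nonneg_left hsT (abs_nonneg r)
    linarith
  · have := nf_sub h hT0 hsT
    have h1 := nf_nonneg h hT0
    have h2 : r * T ≤ |r| * T := mul_le_mul_of_nonneg_right hr hT0
    have h3 : (s - T) * r ≤ (s - T) * φ' T := mul_le_mul_of_nonneg_left hT (sub_nonneg.2 hsT)
    linarith

lemma nf_young {φ φ' : ℝ → ℝ} (h : IsNFunction φ φ') (r : ℝ) {s : ℝ} (hs : 0 ≤ s) :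
    r * s ≤ φ s + fenchelConj φ r := by
  have : r * s - φ s ≤ fenchelConj φ r := le_csSup (nf_bdd h r) ⟨s, hs, rfl⟩
  linarith

lemma nf_convex_abs {φ φ' : ℝ → ℝ} (h : IsNFunction φ φ') :
    ConvexOn ℝ univ (fun x : ℝ => φ |x|) := by
  refine ⟨convex_univ, ?_⟩
  intro x _ y _ a b ha hb hab
  have h1 : |a • x + b • y| ≤ a • |x| + b • |y| := by
    refine (abs_add_le _ _).trans ?_
    simp [abs_mul, abs_of_nonneg ha, abs_of_nonneg hb]
  have h2 : (0:ℝ) ≤ a • |x| + b • |y| := (abs_nonneg _).trans h1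
  exact (nf_mono h (Set.mem_Ici.2 (abs_nonneg _)) h2 h1).trans
    (h.convexOn.2 (Set.mem_Ici.2 (abs_nonneg x)) (Set.mem_Ici.2 (abs_nonneg y)) ha hb hab)

lemma nf_cont_abs {φ φ' : ℝ → ℝ} (h : IsNFunction φ φ') :
    Continuous (fun x : ℝ => φ |x|) :=
  h.continuousOn.comp_continuous continuous_abs (fun x => abs_nonneg x)

/-- Subgradient along a subspace. -/
lemma exists_subgrad {E V : Type*} [NormedAddCommGroup E] [NormedSpace ℝ E]
    [AddCommGroup V] [Module ℝ V]
    (F : E → ℝ) (hF : ConvexOn ℝ univ F) (hc : Continuous F)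
    (T : V →ₗ[ℝ] E) (l : V →ₗ[ℝ] ℝ) (b : E)
    (hmin : ∀ v, F b + l v ≤ F (b + T v)) :
    ∃ τ : E →L[ℝ] ℝ, (∀ v, τ (T v) = l v) ∧ ∀ y, F b + τ (y - b) ≤ F y := by
  have hconv : Convex ℝ {p : E × ℝ | p.1 ∈ univ ∧ F p.1 < p.2} := hF.convex_strict_epigraph
  have hopen : IsOpen {p : E × ℝ | p.1 ∈ univ ∧ F p.1 < p.2} := by
    simp only [mem_univ, true_and]
    exact isOpen_lt (hc.comp continuous_fst) continuous_snd
  have hconv2 : Convex ℝ (range fun v : V => ((b + T v, F b + l v) : E × ℝ)) := by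
    rintro _ ⟨v, rfl⟩ _ ⟨v', rfl⟩ p q hp hq hpq
    refine ⟨p • v + q • v', ?_⟩
    have e1 : b = p • b + q • b := by rw [← add_smul, hpq, one_smul]
    have e2 : F b = p * F b + q * F b := by rw [← add_mul, hpq, one_mul]
    ext
    · simp only [map_add, map_smul, Prod.fst_add, Prod.smul_fst, smul_add]
      conv_lhs => rw [e1]
      abel
    · simp only [map_add, map_smul, Prod.snd_add, Prod.smul_snd, smul_eq_mul]
      linear_combination e2
  have hdisj : Disjoint {p : E × ℝ | p.1 ∈ univ ∧ F p.1 < p.2}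
      (range fun v : V => ((b + T v, F b + l v) : E × ℝ)) := by
    rw [Set.disjoint_left]
    rintro _ ⟨_, h1⟩ ⟨v, rfl⟩
    exact absurd (hmin v) (not_le.2 h1)
  obtain ⟨L, s, hL1, hL2⟩ := geometric_hahn_banach_open hconv hopen hconv2 hdisj
  set ℓ : E →L[ℝ] ℝ := L.comp (ContinuousLinearMap.inl ℝ E ℝ) with hℓ
  set c : ℝ := L (0, 1) with hcdef
  have hL : ∀ y t, L (y, t) = ℓ y + c * t := by
    intro y t
    have : ((y, t) : E × ℝ) = (y, 0) + t • (0, 1) := by ext <;> simp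
    rw [this, map_add, map_smul]
    simp [hℓ, hcdef, mul_comm]
  have hA : ∀ y t, F y < t → ℓ y + c * t < s := by
    intro y t h
    rw [← hL]; exact hL1 _ ⟨mem_univ _, h⟩
  have hB : ∀ v, s ≤ ℓ b + c * F b + (ℓ (T v) + c * l v) := by
    intro v
    have := hL2 _ ⟨v, rfl⟩
    simp only [hL, map_add] at this
    linarith
  have hB0 : s ≤ ℓ b + c * F b := by simpa using hB 0
  have hcneg : c < 0 := by
    have := hA b (F b + 1) (by linarith)
    linarith
  have hzero : ∀ v, ℓ (T v) + c * l v = 0 := by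
    intro v
    by_contra hne
    set k := ℓ (T v) + c * l v with hk
    have h1 := hB (((s - 1 - (ℓ b + c * F b)) / k) • v)
    simp only [map_smul, smul_eq_mul] at h1
    have : (s - 1 - (ℓ b + c * F b)) / k * ℓ (T v) + c * ((s - 1 - (ℓ b + c * F b)) / k * l v)
        = (s - 1 - (ℓ b + c * F b)) / k * k := by rw [hk]; ring
    rw [this, div_mul_cancel₀ _ hne] at h1
    linarith
  refine ⟨(-c⁻¹) • ℓ, ?_, ?_⟩
  · intro v
    have := hzero v
    have h2 : ℓ (T v) = -(c * l v) := by linarith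
    simp [h2, hcneg.ne]
  · intro y
    apply le_of_forall_pos_le_add
    intro ε hε
    have h1 := hA y (F y + ε) (by linarith)
    have h2 : ℓ y - ℓ b < (-c) * (F y + ε - F b) := by linarith
    have h3 : (-c)⁻¹ * (ℓ y - ℓ b) < F y + ε - F b := by
      rw [inv_mul_lt_iff₀ (by linarith)]; exact h2
    simp only [ContinuousLinearMap.smul_apply, map_sub, smul_eq_mul, ← inv_neg]
    linarith

/-- duality identity
`J(u_g) + f·g = min_{v∈V₀} J(v+g) + f·g = −min_{τ∈Σ_f} J*(τ) = −J*(σ)`. -/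
theorem duality_identity {N M : ℕ} (φ φ' : ℝ → ℝ) (hφ : IsNFunction φ φ')
    (B : (Fin N → ℝ) →ₗ[ℝ] (Fin M → ℝ)) (V₀ : Submodule ℝ (Fin N → ℝ))
    (hker : ∀ v ∈ V₀, B v = 0 → v = 0)
    (g f : Fin N → ℝ) (w : Fin M → ℝ) (hw : ∀ α, 0 < w α)
    (u : Fin N → ℝ) (hu : u ∈ V₀)
    (humin : ∀ v ∈ V₀, primalJ w φ B f (u + g) ≤ primalJ w φ B f (v + g))
    (σ : Fin M → ℝ) (hσ : σ ∈ SigmaF B V₀ f)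
    (hσmin : ∀ τ ∈ SigmaF B V₀ f,
      dualJ w (fenchelConj φ) B g σ ≤ dualJ w (fenchelConj φ) B g τ) :
    primalJ w φ B f (u + g) + (∑ i, f i * g i) = - dualJ w (fenchelConj φ) B g σ := by
  apply le_antisymm
  · -- strong duality
    set F : (Fin M → ℝ) → ℝ := fun y => ∑ α, w α * φ |y α| with hFdef
    have hFc : Continuous F :=
      continuous_finset_sum _ fun α _ =>
        continuous_const.mul ((nf_cont_abs hφ).comp (continuous_apply α))
    have hFconv : ConvexOn ℝ univ F := by
      refine ⟨convex_univ, ?_⟩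
      intro x _ y _ a b ha hb hab
      simp only [hFdef, smul_eq_mul, Finset.mul_sum, ← Finset.sum_add_distrib]
      apply Finset.sum_le_sum
      intro α _
      have := (nf_convex_abs hφ).2 (mem_univ (x α)) (mem_univ (y α)) ha hb hab
      simp only [smul_eq_mul] at this
      have := mul_le_mul_of_nonneg_left this (hw α).le
      simp only [Pi.add_apply, Pi.smul_apply, smul_eq_mul]
      linarith
    let l0 : (Fin N → ℝ) →ₗ[ℝ] ℝ := dotProductBilin ℝ ℝ f
    have hl0 : ∀ v, l0 v = ∑ i, f i * v i := fun v => rfl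
    obtain ⟨τ, hτ1, hτ2⟩ := exists_subgrad F hFconv hFc (B.comp V₀.subtype)
      (l0.comp V₀.subtype) (B (u + g)) (by
        intro v
        have := humin (u + v) (V₀.add_mem hu v.2)
        simp only [primalJ, ← hl0, map_add] at this
        simp only [LinearMap.comp_apply, Submodule.subtype_apply, hFdef, map_add]
        have e : B u + B g + B v = B u + B v + B g := by abel
        rw [e]
        linarith)
    set t : Fin M → ℝ := fun α => τ (Pi.single α 1) with ht
    have hτt : ∀ y, τ y = ∑ α, t α * y α := by
      intro y
      conv_lhs => rw [pi_eq_sum_univ' y]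
      simp only [map_sum, map_smul, smul_eq_mul, ht]
      refine Finset.sum_congr rfl fun α _ => ?_
      rw [mul_comm]
    have htS : t ∈ SigmaF B V₀ f := by
      intro v hv
      rw [← hτt, ← hl0]
      exact hτ1 ⟨v, hv⟩
    set b := B (u + g) with hb
    have hcoord : ∀ α x, w α * φ |b α| + t α * (x - b α) ≤ w α * φ |x| := by
      intro α x
      have h1 := hτ2 (Function.update b α x)
      have h2 : Function.update b α x - b = (x - b α) • Pi.single α 1 := by
        ext j
        by_cases hj : j = α
        · subst hj; simp
        · simp [hj]
      rw [h2, map_smul, smul_eq_mul] at h1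
      simp only [hFdef] at h1
      rw [← Finset.add_sum_erase _ _ (Finset.mem_univ α),
        ← Finset.add_sum_erase (a := α) (f := fun β => w β * φ |Function.update b α x β|) _
          (Finset.mem_univ α)] at h1
      have h3 : ∑ β ∈ Finset.univ.erase α, w β * φ |Function.update b α x β|
          = ∑ β ∈ Finset.univ.erase α, w β * φ |b β| := by
        refine Finset.sum_congr rfl fun β hβ => ?_
        rw [Function.update_of_ne (Finset.ne_of_mem_erase hβ)]
      rw [h3, Function.update_self] at h1
      simp only [ht]
      linarith
    have hconj : ∀ α, w α * fenchelConj φ ((w α)⁻¹ * |t α|) ≤ t α * b α - w α * φ |b α| := by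
      intro α
      rw [← le_div_iff₀' (hw α)]
      unfold fenchelConj
      refine csSup_le ⟨_, ⟨0, le_rfl, rfl⟩⟩ ?_
      rintro _ ⟨s, hs, rfl⟩
      rw [le_div_iff₀' (hw α)]
      have e : w α * ((w α)⁻¹ * |t α| * s - φ s) = |t α| * s - w α * φ s := by
        have := (hw α).ne'
        field_simp
      rw [e]
      rcases le_total 0 (t α) with h0 | h0
      · have := hcoord α s
        rw [abs_of_nonneg hs] at this
        rw [abs_of_nonneg h0]
        linarith
      · have := hcoord α (-s)
        rw [abs_neg, abs_of_nonneg hs] at this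
        rw [abs_of_nonpos h0]
        linarith
    have h1 := hσmin t htS
    have h2 : dualJ w (fenchelConj φ) B g t ≤
        (∑ α, (t α * b α - w α * φ |b α|)) - ∑ α, t α * B g α := by
      unfold dualJ
      have := Finset.sum_le_sum (s := Finset.univ) fun α _ => hconj α
      linarith
    rw [Finset.sum_sub_distrib, ← hτt, ← hτt] at h2
    have h3 : τ b = τ (B g) + l0 u := by
      have := htS u hu
      rw [← hτt, ← hl0] at this
      rw [hb, map_add, map_add, this]; ring
    simp only [primalJ, ← hl0, map_add l0]
    linarith
  · -- weak duality
    have h1 := hσ u hu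
    have key : ∑ α, σ α * B (u + g) α ≤
        ∑ α, (w α * φ |B (u + g) α| + w α * fenchelConj φ ((w α)⁻¹ * |σ α|)) := by
      apply Finset.sum_le_sum
      intro α _
      have h2 := mul_le_mul_of_nonneg_left
        (nf_young hφ ((w α)⁻¹ * |σ α|) (abs_nonneg (B (u + g) α))) (hw α).le
      have e : w α * ((w α)⁻¹ * |σ α| * |B (u + g) α|) = |σ α * B (u + g) α| := by
        rw [abs_mul]
        have := (hw α).ne'
        field_simp
      rw [e] at h2
      have := le_abs_self (σ α * B (u + g) α)
      linarith
    rw [Finset.sum_add_distrib] at key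
    have e1 : ∑ α, σ α * B (u + g) α = ∑ α, σ α * B u α + ∑ α, σ α * B g α := by
      simp [mul_add, Finset.sum_add_distrib]
    have e2 : ∑ i, f i * (u + g) i = ∑ i, f i * u i + ∑ i, f i * g i := by
      simp [mul_add, Finset.sum_add_distrib]
    unfold primalJ dualJ
    rw [e2]
    linarith
end
end

section
/- Let φ be an N-function with Fenchel conjugate φ*. Then the map t ↦ φ'(t)/t is non-decreasing on (0,∞) (i.e. φ'(t)/t ≤ φ'(T)/T for all 0 < t ≤ T) if and only if the map t ↦ (φ*)'(t)/t is non-increasing on (0,∞) (i.e. (φ*)'(t)/t ≥ (φ*)'(T)/T for all 0 < t ≤ T). -/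
open Filter MeasureTheory Set Topology

noncomputable section

/-- `t ↦ φ'(t)/t` is non-decreasing on `(0,∞)` iff
`t ↦ (φ*)'(t)/t` is non-increasing on `(0,∞)`. -/
theorem monotone_quotient_iff (φ φ' : ℝ → ℝ) (hφ : IsNFunction φ φ') :
    (∀ t T : ℝ, 0 < t → t ≤ T → φ' t / t ≤ φ' T / T) ↔
    (∀ t T : ℝ, 0 < t → t ≤ T → rcInv φ' T / T ≤ rcInv φ' t / t) := by
  have hb : ∀ t : ℝ, BddAbove {r : ℝ | 0 ≤ r ∧ φ' r ≤ t} := by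
    intro t
    obtain ⟨M, hM⟩ := (hφ.deriv_tendsto_atTop.eventually (eventually_gt_atTop t)).exists_forall_of_atTop
    refine ⟨M, ?_⟩
    rintro r ⟨_, hr⟩
    by_contra hlt
    have := hM r (not_le.mp hlt).le
    linarith
  have ha : ∀ t r : ℝ, 0 ≤ r → φ' r ≤ t → r ≤ rcInv φ' t := fun t r h0 h =>
    le_csSup (hb t) ⟨h0, h⟩
  have hne : ∀ t : ℝ, 0 ≤ t → {r : ℝ | 0 ≤ r ∧ φ' r ≤ t}.Nonempty := fun t ht =>
    ⟨0, le_refl _, by rw [hφ.deriv_zero]; exact ht⟩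
  constructor
  · intro h t T ht htT
    have hT : 0 < T := lt_of_lt_of_le ht htT
    rw [div_le_iff₀ hT]
    refine csSup_le (hne T hT.le) ?_
    rintro r ⟨hr0, hr⟩
    have key : r * (t / T) ≤ rcInv φ' t := by
      have hq : 0 < t / T := div_pos ht hT
      have hq1 : t / T ≤ 1 := (div_le_one hT).mpr htT
      refine ha t _ (by positivity) ?_
      rcases hr0.eq_or_lt with h0 | h0
      · rw [← h0, zero_mul, hφ.deriv_zero]; exact ht.le
      · have h1 := h (r * (t / T)) r (by positivity) (mul_le_of_le_one_right hr0 hq1)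
        rw [div_le_div_iff₀ (by positivity) h0] at h1
        have h2 : φ' (r * (t / T)) ≤ φ' r * (t / T) := by
          refine le_of_mul_le_mul_right ?_ h0
          linarith
        calc _ ≤ φ' r * (t / T) := h2
          _ ≤ T * (t / T) := by gcongr
          _ = t := by field_simp
    have e : r = r * (t / T) / t * T := by field_simp
    rw [e]
    gcongr
  · intro h t T ht htT
    have hT : 0 < T := lt_of_lt_of_le ht htT
    have hft := hφ.deriv_pos t ht
    have hfT := hφ.deriv_pos T hT
    have hm : φ' t ≤ φ' T := hφ.deriv_monotoneOn ht.le hT.le htT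
    by_contra hc
    have hc : φ' T / T * t < φ' t := by
      rw [not_le, lt_div_iff₀ ht] at hc
      exact hc
    obtain ⟨s, hs1, hs2⟩ := exists_between hc
    have hs : 0 < s := lt_trans (by positivity) hs1
    have hgs : rcInv φ' s ≤ t := by
      refine csSup_le (hne s hs.le) ?_
      rintro r ⟨hr0, hr⟩
      by_contra hlt
      have := hφ.deriv_monotoneOn ht.le hr0 (not_le.mp hlt).le
      linarith
    have h1 := h s (φ' T) hs (by linarith)
    have h2 : T ≤ rcInv φ' (φ' T) := ha _ _ hT.le le_rfl
    have h3 : T / φ' T ≤ t / s :=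
      calc T / φ' T ≤ rcInv φ' (φ' T) / φ' T := by gcongr
        _ ≤ rcInv φ' s / s := h1
        _ ≤ t / s := by gcongr
    rw [div_le_div_iff₀ hfT hs] at h3
    rw [div_mul_eq_mul_div, div_lt_iff₀ hT] at hs1
    linarith
end
end

section
/- Let φ be an N-function with Fenchel conjugate φ* such that t ↦ φ'(t)/t is non-decreasing on (0,∞). Then the boundedness 0 < c_φ := lim_{t↘0} φ'(t)/t ≤ lim_{T→∞} φ'(T)/T =: C_φ < ∞ holds if and only if 0 < C_φ⁻¹ = lim_{T→∞} (φ*)'(T)/T ≤ lim_{t↘0} (φ*)'(t)/t = c_φ⁻¹ < ∞; in particular, under these conditions C_φ⁻¹ ≤ (φ*)'(s)/s ≤ c_φ⁻¹ for all s > 0. -/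
open Filter MeasureTheory Set Topology

noncomputable section

theorem aux_bdd {φ φ' : ℝ → ℝ} (hφ : IsNFunction φ φ') (s : ℝ) :
    BddAbove {r : ℝ | 0 ≤ r ∧ φ' r ≤ s} := by
  obtain ⟨M, hM⟩ := (hφ.deriv_tendsto_atTop.eventually (eventually_gt_atTop s)).exists_forall_of_atTop
  refine ⟨M, fun r hr => ?_⟩
  by_contra h
  exact absurd (hM r (not_le.1 h).le) (not_lt.2 hr.2)

theorem aux_strict {φ φ' : ℝ → ℝ} (hφ : IsNFunction φ φ')
    (hmono : ∀ t T : ℝ, 0 < t → t ≤ T → φ' t / t ≤ φ' T / T) {t T : ℝ} (ht : 0 < t) (h : t < T) :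
    φ' t < φ' T := by
  have h1 := hmono t T ht h.le
  have hT : 0 < T := ht.trans h
  rw [div_le_div_iff₀ ht hT] at h1
  have h2 := hφ.deriv_pos t ht
  by_contra h3
  nlinarith

theorem aux_inv {φ φ' : ℝ → ℝ} (hφ : IsNFunction φ φ')
    (hmono : ∀ t T : ℝ, 0 < t → t ≤ T → φ' t / t ≤ φ' T / T) {t : ℝ} (ht : 0 < t) :
    rcInv φ' (φ' t) = t := by
  apply le_antisymm
  · refine csSup_le ⟨t, ht.le, le_rfl⟩ fun r hr => ?_
    by_contra h
    exact absurd (aux_strict hφ hmono ht (not_le.1 h)) (not_lt.2 hr.2)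
  · exact le_csSup (aux_bdd hφ _) ⟨ht.le, le_rfl⟩

theorem aux_anti {φ φ' : ℝ → ℝ} (hφ : IsNFunction φ φ')
    (hmono : ∀ t T : ℝ, 0 < t → t ≤ T → φ' t / t ≤ φ' T / T) {s S : ℝ} (hs : 0 < s) (h : s ≤ S) :
    rcInv φ' S / S ≤ rcInv φ' s / s := by
  have hS : 0 < S := hs.trans_le h
  rw [div_le_iff₀ hS]
  refine csSup_le ⟨0, le_rfl, by rw [hφ.deriv_zero]; exact hS.le⟩ fun r hr => ?_
  have key : r * s / S ≤ rcInv φ' s := by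
    apply le_csSup (aux_bdd hφ _)
    obtain ⟨hr0, hrS⟩ := hr
    refine ⟨by positivity, ?_⟩
    rcases hr0.eq_or_lt with rfl | hr0
    · simp [hφ.deriv_zero, hs.le]
    have h0 : 0 < r * s / S := by positivity
    have h1 : r * s / S ≤ r := by
      rw [div_le_iff₀ hS]; nlinarith
    have h2 := hmono _ _ h0 h1
    rw [div_le_iff₀ h0] at h2
    have h3 : φ' r / r * (r * s / S) = φ' r * s / S := by field_simp
    rw [h3] at h2
    refine h2.trans ?_
    rw [div_le_iff₀ hS]; nlinarith
  rw [div_le_iff₀ hS] at key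
  rw [div_mul_eq_mul_div, le_div_iff₀ hs]
  exact key

theorem aux_zero {φ φ' : ℝ → ℝ} (hφ : IsNFunction φ φ') :
    Tendsto φ' (nhdsWithin 0 (Set.Ioi 0)) (nhdsWithin 0 (Set.Ioi 0)) := by
  refine tendsto_nhdsWithin_iff.2 ⟨?_, ?_⟩
  · have := hφ.deriv_rightContinuous 0 le_rfl
    rwa [hφ.deriv_zero] at this
  · filter_upwards [self_mem_nhdsWithin] with t ht using hφ.deriv_pos t ht

theorem aux_bounds {φ φ' : ℝ → ℝ} (hφ : IsNFunction φ φ')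
    (hmono : ∀ t T : ℝ, 0 < t → t ≤ T → φ' t / t ≤ φ' T / T) {c C : ℝ} (hc : 0 < c)
    (h0 : Tendsto (fun t : ℝ => φ' t / t) (nhdsWithin 0 (Set.Ioi 0)) (nhds c))
    (h1 : Tendsto (fun T : ℝ => φ' T / T) atTop (nhds C)) :
    0 < C ∧ ∀ s : ℝ, 0 < s → C⁻¹ ≤ rcInv φ' s / s ∧ rcInv φ' s / s ≤ c⁻¹ := by
  have hlo : ∀ t, 0 < t → c ≤ φ' t / t := fun t ht => by
    refine le_of_tendsto h0 ?_
    filter_upwards [Ioc_mem_nhdsGT ht] with x hx using hmono x t hx.1 hx.2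
  have hhi : ∀ t, 0 < t → φ' t / t ≤ C := fun t ht => by
    refine ge_of_tendsto h1 ?_
    filter_upwards [eventually_ge_atTop t] with x hx using hmono t x ht hx
  have hC : 0 < C := hc.trans_le ((hlo 1 one_pos).trans (hhi 1 one_pos))
  refine ⟨hC, fun s hs => ⟨?_, ?_⟩⟩
  · rw [le_div_iff₀ hs]
    have hp : 0 < C⁻¹ * s := by positivity
    refine le_csSup (aux_bdd hφ _) ⟨hp.le, ?_⟩
    have := hhi _ hp
    rw [div_le_iff₀ hp] at this
    rwa [mul_inv_cancel_left₀ hC.ne'] at this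
  · rw [div_le_iff₀ hs]
    refine csSup_le ⟨0, le_rfl, by rw [hφ.deriv_zero]; exact hs.le⟩ fun r hr => ?_
    obtain ⟨hr0, hrS⟩ := hr
    rcases hr0.eq_or_lt with rfl | hr0
    · positivity
    have := hlo r hr0
    rw [le_div_iff₀ hr0] at this
    rw [inv_mul_eq_div, le_div_iff₀ hc]
    linarith

/-- under non-decreasing `φ'(t)/t`, the boundedness
`0 < c_φ = lim_{t↘0} φ'(t)/t ≤ lim_{T→∞} φ'(T)/T = C_φ < ∞` holds iff
`0 < C_φ⁻¹ = lim_{T→∞} (φ*)'(T)/T ≤ lim_{t↘0} (φ*)'(t)/t = c_φ⁻¹ < ∞`;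
in particular `C_φ⁻¹ ≤ (φ*)'(s)/s ≤ c_φ⁻¹` for all `s > 0`. -/
theorem boundedness_iff_dual_boundedness (φ φ' : ℝ → ℝ) (hφ : IsNFunction φ φ')
    (hmono : ∀ t T : ℝ, 0 < t → t ≤ T → φ' t / t ≤ φ' T / T) (c C : ℝ) :
    ((0 < c ∧ Tendsto (fun t : ℝ => φ' t / t) (nhdsWithin 0 (Set.Ioi 0)) (nhds c) ∧
        Tendsto (fun T : ℝ => φ' T / T) atTop (nhds C)) ↔
      (0 < C⁻¹ ∧ Tendsto (fun T : ℝ => rcInv φ' T / T) atTop (nhds C⁻¹) ∧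
        Tendsto (fun t : ℝ => rcInv φ' t / t) (nhdsWithin 0 (Set.Ioi 0)) (nhds c⁻¹))) ∧
    ((0 < c ∧ Tendsto (fun t : ℝ => φ' t / t) (nhdsWithin 0 (Set.Ioi 0)) (nhds c) ∧
        Tendsto (fun T : ℝ => φ' T / T) atTop (nhds C)) →
      ∀ s : ℝ, 0 < s → C⁻¹ ≤ rcInv φ' s / s ∧ rcInv φ' s / s ≤ c⁻¹) := by
  have hcomp : ∀ t : ℝ, 0 < t → rcInv φ' (φ' t) / φ' t = (φ' t / t)⁻¹ := fun t ht => by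
    rw [aux_inv hφ hmono ht, inv_div]
  refine ⟨⟨?_, ?_⟩, fun ⟨hc, h0, h1⟩ => (aux_bounds hφ hmono hc h0 h1).2⟩
  · rintro ⟨hc, h0, h1⟩
    obtain ⟨hC, hb⟩ := aux_bounds hφ hmono hc h0 h1
    refine ⟨inv_pos.2 hC, tendsto_order.2 ⟨fun a ha => ?_, fun b hb' => ?_⟩,
      tendsto_order.2 ⟨fun a ha => ?_, fun b hb' => ?_⟩⟩
    · filter_upwards [eventually_gt_atTop 0] with s hs using ha.trans_le (hb s hs).1
    · obtain ⟨t, ht, ht0⟩ := (((h1.inv₀ hC.ne').eventually (eventually_lt_nhds hb')).and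
        (eventually_gt_atTop 0)).exists
      filter_upwards [eventually_ge_atTop (φ' t)] with s hs
      refine (aux_anti hφ hmono (hφ.deriv_pos t ht0) hs).trans_lt ?_
      rw [hcomp t ht0]; exact ht
    · obtain ⟨t, ht, ht0⟩ := (((h0.inv₀ hc.ne').eventually (eventually_gt_nhds ha)).and
        self_mem_nhdsWithin).exists
      filter_upwards [Ioc_mem_nhdsGT (hφ.deriv_pos t ht0)] with s hs
      refine lt_of_lt_of_le ?_ (aux_anti hφ hmono hs.1 hs.2)
      rw [hcomp t ht0]; exact ht
    · filter_upwards [self_mem_nhdsWithin] with s hs using (hb s hs).2.trans_lt hb'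
  · rintro ⟨hC, h1, h0⟩
    have hcC : C⁻¹ ≤ c⁻¹ := by
      have e1 : C⁻¹ ≤ rcInv φ' 1 / 1 := by
        refine le_of_tendsto h1 ?_
        filter_upwards [eventually_ge_atTop 1] with x hx using aux_anti hφ hmono one_pos hx
      have e2 : rcInv φ' 1 / 1 ≤ c⁻¹ := by
        refine ge_of_tendsto h0 ?_
        filter_upwards [Ioc_mem_nhdsGT (one_pos : (0:ℝ) < 1)] with x hx using
          aux_anti hφ hmono hx.1 hx.2
      exact e1.trans e2
    have hc := hC.trans_le hcC
    refine ⟨inv_pos.1 hc, ?_, ?_⟩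
    · have := (h0.comp (aux_zero hφ)).inv₀ hc.ne'
      rw [inv_inv] at this
      refine this.congr' ?_
      filter_upwards [self_mem_nhdsWithin] with t ht
      simp only [Function.comp]
      rw [hcomp t ht, inv_inv]
    · have := (h1.comp hφ.deriv_tendsto_atTop).inv₀ hC.ne'
      rw [inv_inv] at this
      refine this.congr' ?_
      filter_upwards [eventually_gt_atTop 0] with t ht
      simp only [Function.comp]
      rw [hcomp t ht, inv_inv]
end
end

section
/- Let φ be a uniformly convex N-function with uniform convexity constants 0 < c₁ ≤ C₁ such that t ↦ φ'(t)/t is non-decreasing on (0,∞) and bounded in the sense that 0 < c_φ := lim_{t↘0} φ'(t)/t ≤ lim_{T→∞} φ'(T)/T =: C_φ < ∞. Let B: ℝᴺ → ℝᴹ be linear, V₀ ⊆ ℝᴺ a linear subspace with ker(B) ∩ V₀ = {0}, g ∈ ℝᴺ, f ∈ ℝᴺ, w ∈ (0,∞)ᴹ, and σ⁰ ∈ Σ_f. Suppose the sequences (σⁿ) ⊂ ℝᴹ and (uⁿ) ⊂ V₀ satisfy for each n ∈ ℕ₀ the dual IRLS saddle-point system: Σ_α ((φ*)'(w_α⁻¹|σⁿ_α|)/|σⁿ_α|)·σⁿ⁺¹_α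 τ_α − τᵀB(uⁿ⁺¹+g) = 0 for all τ ∈ ℝᴹ, and (σⁿ⁺¹)ᵀBv = f·v for all v ∈ V₀, where the weight at σⁿ_α = 0 is the right limit lim_{t↘0}(φ*)'(w_α⁻¹t)/t. Then the scheme is well-defined, σⁿ ∈ Σ_f for all n, and there exists a constant C_uc < ∞ depending only on c₁ and C₁ such that with κ := c_φ/(4 C_uc C_φ) ∈ (0,1) one has J*(σⁿ) − J*(σ) ≤ (1−κ)ⁿ (J*(σ⁰) − J*(σ)) for all n ∈ ℕ₀, where σ minimizes J* over Σ_f. -/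
open Filter MeasureTheory Set Topology

noncomputable section

/-- Quotient `(φ*)'(w_α⁻¹|t|)/|t|`, interpreted at `t = 0` as the prescribed
right limit `L_α`. -/
def quotW (φ' : ℝ → ℝ) (wα Lα t : ℝ) : ℝ :=
  if t = 0 then Lα else rcInv φ' (wα⁻¹ * |t|) / |t|

structure NSet (φ φ' : ℝ → ℝ) (C₁ c C : ℝ) : Prop where
  nf : IsNFunction φ φ'
  c0 : 0 < c
  C1 : 1 ≤ C₁
  cC : c ≤ C
  lo : ∀ t, 0 ≤ t → c * t ≤ φ' t
  hi : ∀ t, 0 ≤ t → φ' t ≤ C * t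
  sm : ∀ t s, 0 ≤ t → t < s → φ' t < φ' s
  lip : ∀ t s, 0 ≤ t → t ≤ s → φ' s - φ' t ≤ C₁ * C * (s - t)
  mono : ∀ t T : ℝ, 0 < t → t ≤ T → φ' t / t ≤ φ' T / T

lemma NSet.mk' {φ φ' : ℝ → ℝ} {c₁ C₁ c C : ℝ} (hc₁ : 0 < c₁) (h : IsNFunction φ φ')
    (huc : ∀ t s : ℝ, 0 ≤ t → t < s →
      c₁ * (φ' s / s) ≤ (φ' t - φ' s) / (t - s) ∧
      (φ' t - φ' s) / (t - s) ≤ C₁ * (φ' s / s))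
    (hm : ∀ t T : ℝ, 0 < t → t ≤ T → φ' t / t ≤ φ' T / T) (hc : 0 < c)
    (hl : Tendsto (fun t : ℝ => φ' t / t) (nhdsWithin 0 (Set.Ioi 0)) (nhds c))
    (hL : Tendsto (fun T : ℝ => φ' T / T) atTop (nhds C)) : NSet φ φ' C₁ c C := by
  have lo' : ∀ t, 0 < t → c ≤ φ' t / t := by
    intro t ht
    refine le_of_tendsto hl ?_
    filter_upwards [Ioo_mem_nhdsGT ht] with x hx
    exact hm x t hx.1 hx.2.le
  have hi' : ∀ t, 0 < t → φ' t / t ≤ C := by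
    intro t ht
    refine ge_of_tendsto hL ?_
    filter_upwards [eventually_ge_atTop t] with x hx
    exact hm t x ht hx
  have hcC : c ≤ C := (lo' 1 one_pos).trans (hi' 1 one_pos)
  have hC1 : 1 ≤ C₁ := by
    have h1 := (huc 0 1 le_rfl one_pos).2
    have h2 := h.deriv_pos 1 one_pos
    rw [h.deriv_zero] at h1
    norm_num at h1
    nlinarith
  refine ⟨h, hc, hC1, hcC, ?_, ?_, ?_, ?_, hm⟩
  · intro t ht
    rcases ht.eq_or_lt with rfl | ht
    · simp [h.deriv_zero]
    · exact (le_div_iff₀ ht).1 (lo' t ht)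
  · intro t ht
    rcases ht.eq_or_lt with rfl | ht
    · simp [h.deriv_zero]
    · exact (div_le_iff₀ ht).1 (hi' t ht)
  · intro t s ht hts
    have hs : 0 < s := ht.trans_lt hts
    have h1 := (huc t s ht hts).1
    have h2 : 0 < c₁ * (φ' s / s) := mul_pos hc₁ (div_pos (h.deriv_pos s hs) hs)
    by_contra hcon
    push Not at hcon
    have : (φ' t - φ' s) / (t - s) ≤ 0 := div_nonpos_of_nonneg_of_nonpos (by linarith) (by linarith)
    linarith
  · intro t s ht hts
    rcases hts.eq_or_lt with rfl | hts
    · simp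
    have hs : 0 < s := ht.trans_lt hts
    have h1 := (huc t s ht hts).2
    have h3 : (φ' t - φ' s) / (t - s) ≤ C₁ * C :=
      h1.trans (mul_le_mul_of_nonneg_left (hi' s hs) (by linarith))
    rw [div_le_iff_of_neg (by linarith)] at h3
    linarith

section
variable {φ φ' : ℝ → ℝ} {C₁ c C : ℝ}

lemma NSet.ii (H : NSet φ φ' C₁ c C) {u v : ℝ} (hu : 0 ≤ u) (hv : 0 ≤ v) :
    IntervalIntegrable φ' volume u v := by
  apply MonotoneOn.intervalIntegrable
  apply H.nf.deriv_monotoneOn.mono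
  intro x hx
  rw [Set.mem_uIcc] at hx
  rcases hx with hx | hx
  · exact hu.trans hx.1
  · exact hv.trans hx.1

lemma NSet.sub (H : NSet φ φ' C₁ c C) {u v : ℝ} (hu : 0 ≤ u) (hv : 0 ≤ v) :
    φ v - φ u = ∫ x in u..v, φ' x := by
  rw [H.nf.eq_integral v hv, H.nf.eq_integral u hu]
  exact intervalIntegral.integral_interval_sub_left (H.ii le_rfl hv) (H.ii le_rfl hu)

lemma int_aff (a b u v : ℝ) : ∫ x in u..v, (a + b * x) = a * (v - u) + b * (v^2 - u^2) / 2 := by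
  rw [intervalIntegral.integral_add (by simp) (by
    apply Continuous.intervalIntegrable; fun_prop), intervalIntegral.integral_const_mul,
    integral_id, intervalIntegral.integral_const, smul_eq_mul]
  ring

lemma NSet.ge (H : NSet φ φ' C₁ c C) {u v : ℝ} (hu : 0 ≤ u) (huv : u ≤ v) (a b : ℝ)
    (h : ∀ x, u ≤ x → x ≤ v → a + b * x ≤ φ' x) :
    a * (v - u) + b * (v^2 - u^2) / 2 ≤ φ v - φ u := by
  rw [H.sub hu (hu.trans huv), ← int_aff]
  apply intervalIntegral.integral_mono_on huv
  · apply Continuous.intervalIntegrable; fun_prop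
  · exact H.ii hu (hu.trans huv)
  · intro x hx; exact h x hx.1 hx.2

lemma NSet.le (H : NSet φ φ' C₁ c C) {u v : ℝ} (hu : 0 ≤ u) (huv : u ≤ v) (a b : ℝ)
    (h : ∀ x, u ≤ x → x ≤ v → φ' x ≤ a + b * x) :
    φ v - φ u ≤ a * (v - u) + b * (v^2 - u^2) / 2 := by
  rw [H.sub hu (hu.trans huv), ← int_aff]
  apply intervalIntegral.integral_mono_on huv
  · exact H.ii hu (hu.trans huv)
  · apply Continuous.intervalIntegrable; fun_prop
  · intro x hx; exact h x hx.1 hx.2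

lemma NSet.tangent (H : NSet φ φ' C₁ c C) {s t : ℝ} (hs : 0 ≤ s) (ht : 0 ≤ t) :
    φ t + φ' t * (s - t) ≤ φ s := by
  rcases le_total t s with h | h
  · have := H.ge ht h (φ' t) 0 (fun x h1 h2 => by
      have := H.nf.deriv_monotoneOn (show t ∈ Ici 0 from ht) (show x ∈ Ici 0 from ht.trans h1) h1
      linarith)
    linarith
  · have := H.le hs h (φ' t) 0 (fun x h1 h2 => by
      have := H.nf.deriv_monotoneOn (show x ∈ Ici 0 from hs.trans h1) (show t ∈ Ici 0 from ht) h2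
      linarith)
    linarith

lemma NSet.upper (H : NSet φ φ' C₁ c C) {s t : ℝ} (hs : 0 ≤ s) (ht : 0 ≤ t) :
    φ s ≤ φ t + φ' t * (s - t) + C₁ * C / 2 * (s - t)^2 := by
  rcases le_total t s with h | h
  · have := H.le ht h (φ' t - C₁ * C * t) (C₁ * C) (fun x h1 h2 => by
      have := H.lip t x ht h1
      linarith)
    nlinarith
  · have := H.ge hs h (φ' t - C₁ * C * t) (C₁ * C) (fun x h1 h2 => by
      have := H.lip x t (hs.trans h1) h2
      linarith)
    nlinarith

lemma NSet.quad (H : NSet φ φ' C₁ c C) {s t : ℝ} (hs : 0 ≤ s) (ht : 0 < t) :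
    φ t + φ' t / t / 2 * (s^2 - t^2) ≤ φ s := by
  rcases le_total t s with h | h
  · have := H.ge ht.le h 0 (φ' t / t) (fun x h1 h2 => by
      have hx : 0 < x := by linarith
      have := (le_div_iff₀ hx).1 (H.mono t x ht h1)
      linarith)
    linarith
  · have := H.le hs h 0 (φ' t / t) (fun x h1 h2 => by
      rcases (hs.trans h1).eq_or_lt with rfl | hx
      · simp [H.nf.deriv_zero]
      · have := (div_le_iff₀ hx).1 (H.mono x t hx h2)
        linarith)
    linarith

lemma NSet.quad0 (H : NSet φ φ' C₁ c C) {s : ℝ} (hs : 0 ≤ s) :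
    φ 0 + c / 2 * s^2 ≤ φ s := by
  have := H.ge le_rfl hs 0 c (fun x h1 _ => by linarith [H.lo x h1])
  linarith

lemma NSet.surj (H : NSet φ φ' C₁ c C) {r : ℝ} (hr : 0 ≤ r) : ∃ t, 0 ≤ t ∧ φ' t = r := by
  have hcont : ContinuousOn φ' (Ici 0) := by
    have hK : 0 ≤ C₁ * C := mul_nonneg (by linarith [H.C1]) (by linarith [H.c0, H.cC])
    have : LipschitzOnWith ⟨C₁ * C, hK⟩ φ' (Ici 0) := by
      apply LipschitzOnWith.of_dist_le_mul
      intro x hx y hy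
      have hx : 0 ≤ x := hx
      have hy : 0 ≤ y := hy
      rw [Real.dist_eq, Real.dist_eq]
      change _ ≤ C₁ * C * _
      rcases le_total x y with h | h
      · have h1 := H.lip x y hx h
        have h2 := H.nf.deriv_monotoneOn (show x ∈ Ici 0 from hx) (show y ∈ Ici 0 from hy) h
        rw [abs_of_nonpos (by linarith), abs_of_nonpos (by linarith)]
        linarith
      · have h1 := H.lip y x hy h
        have h2 := H.nf.deriv_monotoneOn (show y ∈ Ici 0 from hy) (show x ∈ Ici 0 from hx) h
        rw [abs_of_nonneg (by linarith), abs_of_nonneg (by linarith)]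
        linarith
    exact this.continuousOn
  have hrc : 0 ≤ r / c := div_nonneg hr H.c0.le
  have := intermediate_value_Icc hrc (hcont.mono (fun x hx => hx.1))
  obtain ⟨t, ht, h⟩ := this (show r ∈ _ from ⟨by rw [H.nf.deriv_zero]; exact hr, by
    have := H.lo _ hrc
    rwa [mul_div_cancel₀ _ H.c0.ne'] at this⟩)
  exact ⟨t, ht.1, h⟩

lemma NSet.inv (H : NSet φ φ' C₁ c C) {t : ℝ} (ht : 0 ≤ t) : rcInv φ' (φ' t) = t := by
  have : {r : ℝ | 0 ≤ r ∧ φ' r ≤ φ' t} = Icc 0 t := by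
    ext r
    constructor
    · rintro ⟨h1, h2⟩
      refine ⟨h1, ?_⟩
      by_contra hcon
      push Not at hcon
      linarith [H.sm t r ht hcon]
    · rintro ⟨h1, h2⟩
      exact ⟨h1, H.nf.deriv_monotoneOn (show r ∈ Ici 0 from h1) (show t ∈ Ici 0 from ht) h2⟩
  rw [rcInv, this, csSup_Icc ht]

lemma NSet.conj_lub (H : NSet φ φ' C₁ c C) {t : ℝ} (ht : 0 ≤ t) :
    IsGreatest {x : ℝ | ∃ s : ℝ, 0 ≤ s ∧ x = φ' t * s - φ s} (φ' t * t - φ t) := by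
  refine ⟨⟨t, ht, rfl⟩, ?_⟩
  rintro x ⟨s, hs, rfl⟩
  linarith [H.tangent hs ht]

lemma NSet.conj_eq (H : NSet φ φ' C₁ c C) {t : ℝ} (ht : 0 ≤ t) :
    fenchelConj φ (φ' t) = φ' t * t - φ t := (H.conj_lub ht).csSup_eq

lemma NSet.young (H : NSet φ φ' C₁ c C) {q s : ℝ} (hq : 0 ≤ q) (hs : 0 ≤ s) :
    q * s - φ s ≤ fenchelConj φ q := by
  obtain ⟨t, ht, rfl⟩ := H.surj hq
  rw [H.conj_eq ht]
  linarith [H.tangent hs ht]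

/-- Fact A. -/
lemma NSet.factA (H : NSet φ φ' C₁ c C) {q t : ℝ} (hq : 0 ≤ q) (ht : 0 < t) :
    fenchelConj φ q - fenchelConj φ (φ' t) ≤ t / φ' t / 2 * (q^2 - (φ' t)^2) := by
  obtain ⟨s, hs, rfl⟩ := H.surj hq
  rw [H.conj_eq hs, H.conj_eq ht.le]
  have h1 := H.quad hs ht
  have h2 := H.nf.deriv_pos t ht
  set q := φ' s
  set r := φ' t
  have h3 : 0 ≤ t / r / 2 * (q - r / t * s)^2 := by positivity
  have h4 : t / r / 2 * (q - r / t * s)^2 = t / r / 2 * q^2 - q * s + r / t / 2 * s^2 := by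
    field_simp
    ring
  have h5 : t / r / 2 * (q^2 - r^2) = t / r / 2 * q^2 - t * r / 2 := by
    field_simp
  have h6 : r / t / 2 * (s^2 - t^2) = r / t / 2 * s^2 - t * r / 2 := by
    field_simp
  linarith

lemma NSet.factA0 (H : NSet φ φ' C₁ c C) {q : ℝ} (hq : 0 ≤ q) :
    fenchelConj φ q - fenchelConj φ 0 ≤ 1 / c / 2 * q^2 := by
  obtain ⟨s, hs, rfl⟩ := H.surj hq
  have h0 := H.conj_eq le_rfl
  rw [H.nf.deriv_zero] at h0
  rw [H.conj_eq hs, h0]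
  have h1 := H.quad0 hs
  have hc := H.c0
  set q := φ' s
  have h3 : 0 ≤ 1 / c / 2 * (q - c * s)^2 := by positivity
  have h4 : 1 / c / 2 * (q - c * s)^2 = 1 / c / 2 * q^2 - q * s + c / 2 * s^2 := by
    field_simp
    ring
  linarith

lemma NSet.Kpos (H : NSet φ φ' C₁ c C) : 0 < C₁ * C :=
  mul_pos (by linarith [H.C1]) (by linarith [H.c0, H.cC])

lemma NSet.CleK (H : NSet φ φ' C₁ c C) : C ≤ C₁ * C := by
  nlinarith [H.C1, H.c0, H.cC]

/-- Fact B. -/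
lemma NSet.factB (H : NSet φ φ' C₁ c C) {q t : ℝ} (hq : 0 ≤ q) (ht : 0 ≤ t) :
    t * (q - φ' t) + 1 / (C₁ * C) / 2 * (q - φ' t)^2 ≤ fenchelConj φ q - fenchelConj φ (φ' t) := by
  have hK := H.Kpos
  have hr : φ' t ≤ C₁ * C * t := (H.hi t ht).trans (mul_le_mul_of_nonneg_right H.CleK ht)
  rw [H.conj_eq ht]
  set K := C₁ * C with hKd
  set r := φ' t with hrd
  have hs : 0 ≤ t + (q - r) / K := by
    have : t + (q - r) / K = (K * t + q - r) / K := by field_simp; ring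
    rw [this]
    apply div_nonneg _ hK.le
    linarith
  have h1 := H.upper hs ht
  have h2 := H.young hq hs
  rw [← hKd, ← hrd] at h1
  have h3 : K / 2 * (t + (q - r) / K - t)^2 = 1 / K / 2 * (q - r)^2 := by
    field_simp
    ring
  have h4 : (q - r) * ((q - r) / K) = 2 * (1 / K / 2 * (q - r)^2) := by
    field_simp
  nlinarith

lemma NSet.L_eq (H : NSet φ φ' C₁ c C)
    (hl : Tendsto (fun t : ℝ => φ' t / t) (nhdsWithin 0 (Set.Ioi 0)) (nhds c))
    {w L : ℝ} (hw : 0 < w)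
    (hL : Tendsto (fun t : ℝ => rcInv φ' (w⁻¹ * t) / t) (nhdsWithin 0 (Set.Ioi 0)) (nhds L)) :
    L = 1 / (w * c) := by
  have h0 : Tendsto (fun x => w * φ' x) (nhdsWithin 0 (Ioi 0)) (nhdsWithin 0 (Ioi 0)) := by
    rw [tendsto_nhdsWithin_iff]
    constructor
    · have := (H.nf.deriv_rightContinuous 0 le_rfl).const_mul w
      simpa [H.nf.deriv_zero] using this
    · filter_upwards [self_mem_nhdsWithin] with x hx
      exact mul_pos hw (H.nf.deriv_pos x hx)
  have h1 := hL.comp h0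
  have h2 : Tendsto (fun x => w⁻¹ * (φ' x / x)⁻¹) (nhdsWithin 0 (Ioi 0)) (nhds (w⁻¹ * c⁻¹)) :=
    (hl.inv₀ H.c0.ne').const_mul _
  have h3 : Tendsto (fun x => w⁻¹ * (φ' x / x)⁻¹) (nhdsWithin 0 (Ioi 0)) (nhds L) := by
    refine h1.congr' ?_
    filter_upwards [self_mem_nhdsWithin] with x hx
    have hx : 0 < x := hx
    have := H.nf.deriv_pos x hx
    simp only [Function.comp]
    rw [inv_mul_cancel_left₀ hw.ne', H.inv hx.le]
    field_simp
  rw [tendsto_nhds_unique h3 h2]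
  field_simp

/-- Pointwise facts for one coordinate. -/
lemma NSet.coord (H : NSet φ φ' C₁ c C)
    (hl : Tendsto (fun t : ℝ => φ' t / t) (nhdsWithin 0 (Set.Ioi 0)) (nhds c))
    {w L : ℝ} (hw : 0 < w)
    (hL : Tendsto (fun t : ℝ => rcInv φ' (w⁻¹ * t) / t) (nhdsWithin 0 (Set.Ioi 0)) (nhds L))
    (x : ℝ) : ∃ a, a = quotW φ' w L x ∧ 0 ≤ a ∧ a ≤ 1 / (w * c) ∧
      (∀ z, w * fenchelConj φ (w⁻¹ * |z|) - w * fenchelConj φ (w⁻¹ * |x|) ≤ a / 2 * (z^2 - x^2)) ∧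
      (∀ y, a * x * (y - x) + 1 / (C₁ * C * w) / 2 * (y - x)^2 ≤
        w * fenchelConj φ (w⁻¹ * |y|) - w * fenchelConj φ (w⁻¹ * |x|)) := by
  have hLe := H.L_eq hl hw hL
  have hc := H.c0
  have hK := H.Kpos
  have hCK := H.CleK
  have hC : 0 < C := by linarith [H.cC]
  refine ⟨_, rfl, ?_⟩
  rcases eq_or_ne x 0 with rfl | hx
  · have ha : quotW φ' w L 0 = 1 / (w * c) := by simp [quotW, hLe]
    rw [ha]
    refine ⟨by positivity, le_rfl, ?_, ?_⟩
    · intro z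
      have h := H.factA0 (q := w⁻¹ * |z|) (by positivity)
      have := mul_le_mul_of_nonneg_left h hw.le
      simp only [abs_zero, mul_zero]
      rw [mul_pow, sq_abs] at this
      have e : w * (1 / c / 2 * (w⁻¹ ^ 2 * z^2)) = 1 / (w * c) / 2 * (z^2 - 0^2) := by
        field_simp
        ring
      linarith
    · intro y
      have h := H.factB (q := w⁻¹ * |y|) (t := 0) (by positivity) le_rfl
      rw [H.nf.deriv_zero] at h
      have := mul_le_mul_of_nonneg_left h hw.le
      simp only [abs_zero, mul_zero]
      rw [sub_zero, mul_pow, sq_abs] at this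
      have e : w * (0 * (w⁻¹ * |y|) + 1 / (C₁ * C) / 2 * (w⁻¹ ^ 2 * y^2))
        = 1 / (C₁ * C * w) / 2 * (y - 0)^2 := by
        field_simp
        ring
      linarith
  · have hx' : 0 < |x| := abs_pos.2 hx
    obtain ⟨t, ht, hr⟩ := H.surj (r := w⁻¹ * |x|) (by positivity)
    have ht : 0 < t := by
      rcases ht.eq_or_lt with rfl | h
      · rw [H.nf.deriv_zero] at hr
        have : 0 < w⁻¹ * |x| := by positivity
        linarith
      · exact h
    have ha : quotW φ' w L x = t / |x| := by
      rw [quotW, if_neg hx, ← hr, H.inv ht.le]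
    rw [ha]
    have hxr : |x| = w * φ' t := by rw [hr]; field_simp
    have hlo := H.lo t ht.le
    have hhi := H.hi t ht.le
    have hp := H.nf.deriv_pos t ht
    refine ⟨by positivity, ?_, ?_, ?_⟩
    · rw [hxr, div_le_div_iff₀ (by positivity) (by positivity)]
      nlinarith
    · intro z
      have h := H.factA (q := w⁻¹ * |z|) (by positivity) ht
      have h2 := mul_le_mul_of_nonneg_left h hw.le
      rw [hr] at h2
      rw [mul_pow, mul_pow, sq_abs, sq_abs] at h2
      have e : w * (t / (w⁻¹ * |x|) / 2 * (w⁻¹^2 * z^2 - w⁻¹^2 * x^2)) = t / |x| / 2 * (z^2 - x^2) := by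
        field_simp
      linarith
    · intro y
      have h := H.factB (q := w⁻¹ * |y|) (by positivity) ht.le
      have h2 := mul_le_mul_of_nonneg_left h hw.le
      rw [hr] at h2
      have e : w * (t * (w⁻¹ * |y| - w⁻¹ * |x|) + 1 / (C₁ * C) / 2 * (w⁻¹ * |y| - w⁻¹ * |x|)^2)
        = t * (|y| - |x|) + 1 / (C₁ * C * w) / 2 * (|y| - |x|)^2 := by
        field_simp
      have hge : 1 / (C₁ * C * w) ≤ t / |x| := by
        rw [hxr, div_le_div_iff₀ (by positivity) (by positivity)]
        have : φ' t ≤ C₁ * C * t := hhi.trans (mul_le_mul_of_nonneg_right hCK ht.le)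
        nlinarith
      have hd : 0 ≤ |x| * |y| - x * y := by
        rw [← abs_mul]; linarith [le_abs_self (x * y)]
      have h5 := mul_le_mul_of_nonneg_right hge hd
      have e2 : t = t / |x| * |x| := by field_simp
      set a := t / |x|
      set b := 1 / (C₁ * C * w)
      have e3 : t * (|y| - |x|) + b / 2 * (|y| - |x|)^2 - (a * x * (y - x) + b / 2 * (y - x)^2)
        = (a - b) * (|x| * |y| - x * y) := by
        have e4 := sq_abs x
        have e5 := sq_abs y
        rw [e2]
        linear_combination (b/2 - a) * e4 + b / 2 * e5
      linarith
end

/-- linear convergence of the dual IRLS scheme. There is a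
constant `C_uc`, depending only on the uniform convexity constants `c₁ ≤ C₁`,
such that for every setting satisfying the hypotheses the iterates stay in
`Σ_f` and, with `κ = c_φ/(4 C_uc C_φ) ∈ (0,1)`,
`J*(σⁿ) − J*(σ) ≤ (1−κ)ⁿ (J*(σ⁰) − J*(σ))`. -/
theorem dual_IRLS_linear_convergence (c₁ C₁ : ℝ) (hc₁ : 0 < c₁) (hc₁C₁ : c₁ ≤ C₁) :
    ∃ Cuc : ℝ, 0 < Cuc ∧
    ∀ (φ φ' : ℝ → ℝ), IsNFunction φ φ' →
    -- uniform convexity with constants c₁ ≤ C₁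
    (∀ t s : ℝ, 0 ≤ t → t < s →
      c₁ * (φ' s / s) ≤ (φ' t - φ' s) / (t - s) ∧
      (φ' t - φ' s) / (t - s) ≤ C₁ * (φ' s / s)) →
    -- φ'(t)/t non-decreasing
    (∀ t T : ℝ, 0 < t → t ≤ T → φ' t / t ≤ φ' T / T) →
    ∀ (cφ Cφ : ℝ), 0 < cφ →
    Tendsto (fun t : ℝ => φ' t / t) (nhdsWithin 0 (Set.Ioi 0)) (nhds cφ) →
    Tendsto (fun T : ℝ => φ' T / T) atTop (nhds Cφ) →
    ∀ (N M : ℕ) (B : (Fin N → ℝ) →ₗ[ℝ] (Fin M → ℝ)) (V₀ : Submodule ℝ (Fin N → ℝ)),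
    (∀ v ∈ V₀, B v = 0 → v = 0) →
    ∀ (g f : Fin N → ℝ) (w : Fin M → ℝ), (∀ α, 0 < w α) →
    -- right limits interpreting the weight at σⁿ_α = 0
    ∀ (L : Fin M → ℝ),
    (∀ α, Tendsto (fun t : ℝ => rcInv φ' ((w α)⁻¹ * t) / t)
      (nhdsWithin 0 (Set.Ioi 0)) (nhds (L α))) →
    ∀ (σs : ℕ → Fin M → ℝ) (us : ℕ → Fin N → ℝ),
    σs 0 ∈ SigmaF B V₀ f →
    (∀ n : ℕ, us (n + 1) ∈ V₀) →
    -- dual IRLS saddle-point system, first equation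
    (∀ n : ℕ, ∀ τ : Fin M → ℝ,
      (∑ α, quotW φ' (w α) (L α) (σs n α) * σs (n + 1) α * τ α)
        - (∑ α, τ α * B (us (n + 1) + g) α) = 0) →
    -- dual IRLS saddle-point system, second equation
    (∀ n : ℕ, ∀ v ∈ V₀, (∑ α, σs (n + 1) α * B v α) = ∑ i, f i * v i) →
    ∀ σmin ∈ SigmaF B V₀ f,
    (∀ τ ∈ SigmaF B V₀ f,
      dualJ w (fenchelConj φ) B g σmin ≤ dualJ w (fenchelConj φ) B g τ) →
    (∀ n : ℕ, σs n ∈ SigmaF B V₀ f) ∧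
    0 < cφ / (4 * Cuc * Cφ) ∧ cφ / (4 * Cuc * Cφ) < 1 ∧
    ∀ n : ℕ,
      dualJ w (fenchelConj φ) B g (σs n) - dualJ w (fenchelConj φ) B g σmin ≤
        (1 - cφ / (4 * Cuc * Cφ)) ^ n *
          (dualJ w (fenchelConj φ) B g (σs 0) - dualJ w (fenchelConj φ) B g σmin) := by
  have hC₁ : 0 < C₁ := by linarith
  refine ⟨C₁, hC₁, ?_⟩
  intro φ φ' hN huc hm cφ Cφ hcφ hl hLim N M B V₀ _ g f w hw L hL σs us h0 hus he1 he2 σm hσm _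
  have H := NSet.mk' hc₁ hN huc hm hcφ hl hLim
  have hK := H.Kpos
  have hCφ : 0 < Cφ := by linarith [H.cC]
  have hmem : ∀ n, σs n ∈ SigmaF B V₀ f := by
    intro n
    cases n with
    | zero => exact h0
    | succ n => exact he2 n
  have hκ0 : 0 < cφ / (4 * C₁ * Cφ) := by positivity
  have hκ1 : cφ / (4 * C₁ * Cφ) < 1 := by
    rw [div_lt_one (by positivity)]
    nlinarith [H.cC, H.CleK]
  refine ⟨hmem, hκ0, hκ1, ?_⟩
  have hκd : cφ / (4 * C₁ * Cφ) * (4 * (C₁ * Cφ)) = cφ := by field_simp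
  set κ := cφ / (4 * C₁ * Cφ) with hκ
  set J := dualJ w (fenchelConj φ) B g with hJ
  have step : ∀ n, J (σs (n+1)) - J (σs n) ≤ κ * (J σm - J (σs n)) := by
    intro n
    set x := σs n with hx
    set z := σs (n+1) with hz
    have pw : ∀ α, w α * fenchelConj φ ((w α)⁻¹ * |z α|) - w α * fenchelConj φ ((w α)⁻¹ * |x α|)
        - quotW φ' (w α) (L α) (x α) * z α * (z α - x α - κ * (σm α - x α)) ≤
        κ * (w α * fenchelConj φ ((w α)⁻¹ * |σm α|) - w α * fenchelConj φ ((w α)⁻¹ * |x α|)) := by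
      intro α
      obtain ⟨a, ha, ha0, ha1, hA, hB⟩ := H.coord hl (hw α) (hL α) (x α)
      rw [← ha]
      have hA := hA (z α)
      have hB := mul_le_mul_of_nonneg_left (hB (σm α)) hκ0.le
      have hwα := hw α
      have h1 : a * κ ≤ 1 / (C₁ * Cφ * w α) := by
        calc a * κ ≤ 1 / (w α * cφ) * κ := mul_le_mul_of_nonneg_right ha1 hκ0.le
          _ = 1 / (C₁ * Cφ * w α) / 4 := by rw [hκ]; field_simp
          _ ≤ 1 / (C₁ * Cφ * w α) := by
            have : 0 < 1 / (C₁ * Cφ * w α) := by positivity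
            linarith
      have h2 := mul_le_mul_of_nonneg_right h1
        (show 0 ≤ κ / 2 * (σm α - x α)^2 by positivity)
      have h3 : 0 ≤ a / 2 * (z α - (x α + κ * (σm α - x α)))^2 := by positivity
      nlinarith
    have hs := Finset.sum_le_sum (s := Finset.univ) (fun α _ => pw α)
    have h1 := he1 n (fun α => z α - x α - κ * (σm α - x α))
    have hz' := hmem (n+1) (us (n+1)) (hus n)
    have hx' := hmem n (us (n+1)) (hus n)
    have hm' := hσm (us (n+1)) (hus n)
    rw [← hz] at hz'
    rw [← hx] at hx'
    have h2 : ∑ α, (z α - x α - κ * (σm α - x α)) * B (us (n+1) + g) α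
        = (∑ α, z α * B g α) - (∑ α, x α * B g α)
          - κ * ((∑ α, σm α * B g α) - ∑ α, x α * B g α) := by
      have : ∑ α, (z α - x α - κ * (σm α - x α)) * B (us (n+1) + g) α
        = ((∑ α, z α * B (us (n+1)) α) - (∑ α, x α * B (us (n+1)) α)
          - κ * ((∑ α, σm α * B (us (n+1)) α) - ∑ α, x α * B (us (n+1)) α)) +
          ((∑ α, z α * B g α) - (∑ α, x α * B g α)
          - κ * ((∑ α, σm α * B g α) - ∑ α, x α * B g α)) := by
        simp only [← Finset.sum_sub_distrib, Finset.mul_sum, ← Finset.sum_add_distrib]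
        refine Finset.sum_congr rfl fun α _ => ?_
        rw [map_add, Pi.add_apply]
        ring
      rw [this, hz', hx', hm']
      ring
    rw [h2] at h1
    simp only [Finset.sum_sub_distrib, ← Finset.mul_sum] at hs
    simp only [hJ, dualJ]
    linarith
  intro n
  induction n with
  | zero => simp
  | succ n ih =>
    have h1 := step n
    have h2 := mul_le_mul_of_nonneg_left ih (show 0 ≤ 1 - κ by linarith)
    rw [pow_succ]
    linarith
end
end

section
/- Let φ be a uniformly convex N-function with uniform convexity constants 0 < c₁ ≤ C₁ such that t ↦ φ'(t)/t is non-decreasing on (0,∞) and bounded with 0 < c_φ := lim_{t↘0} φ'(t)/t ≤ lim_{T→∞} φ'(T)/T =: C_φ < ∞. Let B: ℝᴺ → ℝᴹ be linear, V₀ ⊆ ℝᴺ with ker(B) ∩ V₀ = {0}, g, f ∈ ℝᴺ, w ∈ (0,∞)ᴹ. Let u_g minimize J over g + V₀, σ minimize J* over Σ_f, and let σⁿ ∈ Σ_f, σⁿ⁺¹ ∈ Σ_f, uⁿ⁺¹ ∈ V₀ satisfy the dual IRLS saddle-point system: Σ_α ((φ*)'(w_α⁻¹|σⁿ_α|)/|σⁿ_α|)·σⁿ⁺¹_α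 τ_α − τᵀB(uⁿ⁺¹+g) = 0 for all τ ∈ ℝᴹ, and (σⁿ⁺¹)ᵀBv = f·v for all v ∈ V₀. Then with u_g^{n+1} := uⁿ⁺¹ + g there exists a constant C < ∞ depending only on c₁ and C₁ such that J(u_g^{n+1}) − J(u_g) ≤ C · (C_φ/c_φ) · (J*(σⁿ) − J*(σ)). -/
open Filter MeasureTheory Set Topology

noncomputable section

def awt (φ' : ℝ → ℝ) (cφ r : ℝ) : ℝ := if r = 0 then cφ else φ' |r| / |r|

structure UCData (φ φ' : ℝ → ℝ) (c₁ C₁ cφ Cφ : ℝ) : Prop where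
  hc₁ : 0 < c₁
  hN : IsNFunction φ φ'
  huc : ∀ t s : ℝ, 0 ≤ t → t < s →
      c₁ * (φ' s / s) ≤ (φ' t - φ' s) / (t - s) ∧
      (φ' t - φ' s) / (t - s) ≤ C₁ * (φ' s / s)
  hmono : ∀ t T : ℝ, 0 < t → t ≤ T → φ' t / t ≤ φ' T / T
  hcφ : 0 < cφ
  hlim0 : Tendsto (fun t : ℝ => φ' t / t) (nhdsWithin 0 (Set.Ioi 0)) (nhds cφ)
  hlimT : Tendsto (fun T : ℝ => φ' T / T) atTop (nhds Cφ)

namespace UCData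

variable {φ φ' : ℝ → ℝ} {c₁ C₁ cφ Cφ : ℝ}

theorem c_le (h : UCData φ φ' c₁ C₁ cφ Cφ) {t : ℝ} (ht : 0 < t) : cφ ≤ φ' t / t := by
  refine le_of_tendsto h.hlim0 ?_
  filter_upwards [Ioo_mem_nhdsGT ht] with x hx
  exact h.hmono x t hx.1 hx.2.le

theorem le_C (h : UCData φ φ' c₁ C₁ cφ Cφ) {t : ℝ} (ht : 0 < t) : φ' t / t ≤ Cφ := by
  refine ge_of_tendsto h.hlimT ?_
  filter_upwards [eventually_ge_atTop t] with x hx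
  exact h.hmono t x ht hx

theorem slope (h : UCData φ φ' c₁ C₁ cφ Cφ) {t s : ℝ} (ht : 0 ≤ t) (hs : t < s) :
    c₁ * (φ' s / s) * (s - t) ≤ φ' s - φ' t ∧ φ' s - φ' t ≤ C₁ * (φ' s / s) * (s - t) := by
  have h1 := h.huc t s ht hs
  have e : (φ' t - φ' s) / (t - s) = (φ' s - φ' t) / (s - t) := by
    rw [← neg_sub (φ' s), ← neg_sub s, neg_div_neg_eq]
  rw [e] at h1
  have : 0 < s - t := by linarith
  rw [le_div_iff₀ this, div_le_iff₀ this] at h1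
  exact h1

theorem c1_le (h : UCData φ φ' c₁ C₁ cφ Cφ) : c₁ ≤ 1 ∧ 1 ≤ C₁ := by
  have h1 := h.slope (le_refl 0) one_pos
  have h2 := h.hN.deriv_zero
  have h3 := h.hN.deriv_pos 1 one_pos
  simp only [h2, div_one, sub_zero, mul_one] at h1
  constructor <;> nlinarith

theorem Cpos (h : UCData φ φ' c₁ C₁ cφ Cφ) : 0 < Cφ :=
  h.hcφ.trans_le ((h.c_le one_pos).trans (h.le_C one_pos))

theorem awt_ge (h : UCData φ φ' c₁ C₁ cφ Cφ) (r : ℝ) : cφ ≤ awt φ' cφ r := by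
  unfold awt
  split_ifs with hr
  · exact le_rfl
  · exact h.c_le (abs_pos.mpr hr)

theorem awt_le (h : UCData φ φ' c₁ C₁ cφ Cφ) (r : ℝ) : awt φ' cφ r ≤ Cφ := by
  unfold awt
  split_ifs with hr
  · exact (h.c_le one_pos).trans (h.le_C one_pos)
  · exact h.le_C (abs_pos.mpr hr)

theorem awt_mul (h : UCData φ φ' c₁ C₁ cφ Cφ) (r : ℝ) : awt φ' cφ r * |r| = φ' |r| := by
  unfold awt
  split_ifs with hr
  · simp [hr, h.hN.deriv_zero]
  · exact div_mul_cancel₀ _ (abs_ne_zero.mpr hr)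

theorem awt_le_quot (h : UCData φ φ' c₁ C₁ cφ Cφ) {t s : ℝ} (ht : 0 ≤ t) (hs : t ≤ s)
    (hs0 : 0 < s) : awt φ' cφ t ≤ φ' s / s := by
  unfold awt
  split_ifs with hr
  · exact h.c_le hs0
  · rw [abs_of_nonneg ht]
    exact h.hmono t s (lt_of_le_of_ne ht (Ne.symm hr)) hs

theorem intble (h : UCData φ φ' c₁ C₁ cφ Cφ) {a b : ℝ} (ha : 0 ≤ a) (hb : 0 ≤ b) :
    IntervalIntegrable φ' volume a b := by
  apply MonotoneOn.intervalIntegrable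
  apply h.hN.deriv_monotoneOn.mono
  intro x hx
  exact (le_min ha hb).trans hx.1

theorem diff (h : UCData φ φ' c₁ C₁ cφ Cφ) {a b : ℝ} (ha : 0 ≤ a) (hb : 0 ≤ b) :
    φ b - φ a = ∫ s in a..b, φ' s := by
  rw [h.hN.eq_integral a ha, h.hN.eq_integral b hb,
    intervalIntegral.integral_interval_sub_left (h.intble le_rfl hb) (h.intble le_rfl ha)]

theorem lin_int (a b A K t : ℝ) : ∫ s in a..b, (A + K * (s - t)) =
    A * (b - a) + K / 2 * ((b - t) ^ 2 - (a - t) ^ 2) := by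
  have : ∀ x ∈ Set.uIcc a b, HasDerivAt (fun s => A * s + K / 2 * (s - t) ^ 2)
      (A + K * (x - t)) x := by
    intro x _
    have h1 := ((hasDerivAt_id x).const_mul A).add
      ((((hasDerivAt_id x).sub_const t).pow 2).const_mul (K / 2))
    refine HasDerivAt.congr_deriv h1 ?_
    simp
    ring
  rw [intervalIntegral.integral_eq_sub_of_hasDerivAt this
    (Continuous.intervalIntegrable (by fun_prop) _ _)]
  ring

theorem lin_intble (a b A K t : ℝ) :
    IntervalIntegrable (fun s => A + K * (s - t)) volume a b :=
  Continuous.intervalIntegrable (by fun_prop) _ _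

theorem lowerNN (h : UCData φ φ' c₁ C₁ cφ Cφ) {q t : ℝ} (hq : 0 ≤ q) (ht : 0 ≤ t) :
    c₁ / 2 * awt φ' cφ t * (q - t) ^ 2 ≤ φ q - φ t - φ' t * (q - t) := by
  rcases le_total t q with hle | hle
  · have h1 : ∫ s in t..q, (φ' t + (c₁ * awt φ' cφ t) * (s - t)) ≤ ∫ s in t..q, φ' s := by
      refine intervalIntegral.integral_mono_on hle (lin_intble ..) (h.intble ht hq) ?_
      intro s hs
      rcases eq_or_lt_of_le hs.1 with he | hl
      · simp [he]
      · have h2 := (h.slope ht hl).1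
        have h3 := h.awt_le_quot ht hl.le (ht.trans_lt hl)
        have h4 : c₁ * awt φ' cφ t * (s - t) ≤ c₁ * (φ' s / s) * (s - t) :=
          mul_le_mul_of_nonneg_right (mul_le_mul_of_nonneg_left h3 h.hc₁.le) (by linarith)
        linarith
    rw [lin_int, ← h.diff ht hq] at h1
    nlinarith
  · have h1 : ∫ s in q..t, φ' s ≤ ∫ s in q..t, (φ' t + (c₁ * awt φ' cφ t) * (s - t)) := by
      refine intervalIntegral.integral_mono_on hle (h.intble hq ht) (lin_intble ..) ?_
      intro s hs
      rcases eq_or_lt_of_le hs.2 with he | hl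
      · simp [he]
      · have hs0 : 0 ≤ s := hq.trans hs.1
        have h2 := (h.slope hs0 hl).1
        have h3 : awt φ' cφ t ≤ φ' t / t := h.awt_le_quot ht le_rfl (hs0.trans_lt hl)
        have h4 : c₁ * awt φ' cφ t * (t - s) ≤ c₁ * (φ' t / t) * (t - s) :=
          mul_le_mul_of_nonneg_right (mul_le_mul_of_nonneg_left h3 h.hc₁.le) (by linarith)
        linarith
    rw [lin_int, ← h.diff hq ht] at h1
    nlinarith

theorem upperNN (h : UCData φ φ' c₁ C₁ cφ Cφ) {q t : ℝ} (hq : 0 ≤ q) (ht : 0 ≤ t) :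
    φ q - φ t - φ' t * (q - t) ≤ C₁ * Cφ / 2 * (q - t) ^ 2 := by
  have hC : 0 ≤ C₁ := by linarith [h.c1_le.2]
  rcases le_total t q with hle | hle
  · have h1 : ∫ s in t..q, φ' s ≤ ∫ s in t..q, (φ' t + (C₁ * Cφ) * (s - t)) := by
      refine intervalIntegral.integral_mono_on hle (h.intble ht hq) (lin_intble ..) ?_
      intro s hs
      rcases eq_or_lt_of_le hs.1 with he | hl
      · simp [he]
      · have h2 := (h.slope ht hl).2
        have h3 := h.le_C (ht.trans_lt hl)
        have h4 : C₁ * (φ' s / s) * (s - t) ≤ C₁ * Cφ * (s - t) :=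
          mul_le_mul_of_nonneg_right (mul_le_mul_of_nonneg_left h3 hC) (by linarith)
        linarith
    rw [lin_int, ← h.diff ht hq] at h1
    nlinarith
  · have h1 : ∫ s in q..t, (φ' t + (C₁ * Cφ) * (s - t)) ≤ ∫ s in q..t, φ' s := by
      refine intervalIntegral.integral_mono_on hle (lin_intble ..) (h.intble hq ht) ?_
      intro s hs
      rcases eq_or_lt_of_le hs.2 with he | hl
      · simp [he]
      · have hs0 : 0 ≤ s := hq.trans hs.1
        have h2 := (h.slope hs0 hl).2
        have h3 := h.le_C (hs0.trans_lt hl)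
        have h4 : C₁ * (φ' t / t) * (t - s) ≤ C₁ * Cφ * (t - s) :=
          mul_le_mul_of_nonneg_right (mul_le_mul_of_nonneg_left h3 hC) (by linarith)
        linarith
    rw [lin_int, ← h.diff hq ht] at h1
    nlinarith

theorem awt_abs (r : ℝ) : awt φ' cφ |r| = awt φ' cφ r := by
  simp [awt]

theorem lower (h : UCData φ φ' c₁ C₁ cφ Cφ) (p r : ℝ) :
    c₁ / 2 * (awt φ' cφ r * (p - r) ^ 2) ≤ φ |p| - φ |r| - awt φ' cφ r * r * (p - r) := by
  have h1 := h.lowerNN (abs_nonneg p) (abs_nonneg r)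
  rw [awt_abs, ← h.awt_mul r] at h1
  have ha : 0 < awt φ' cφ r := h.hcφ.trans_le (h.awt_ge r)
  have hd : 0 ≤ |p| * |r| - p * r := by rw [← abs_mul]; linarith [le_abs_self (p * r)]
  have h2 : 0 ≤ (1 - c₁) * (awt φ' cφ r * (|p| * |r| - p * r)) :=
    mul_nonneg (by linarith [h.c1_le.1]) (mul_nonneg ha.le hd)
  have ep := sq_abs p
  have er := sq_abs r
  have e1 : (p - r) ^ 2 = (|p| - |r|) ^ 2 + 2 * (|p| * |r| - p * r) := by
    linear_combination -ep - er
  have e2 : awt φ' cφ r * r * (p - r) =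
      awt φ' cφ r * |r| * (|p| - |r|) - awt φ' cφ r * (|p| * |r| - p * r) := by
    linear_combination awt φ' cφ r * er
  rw [e1, e2]
  linarith

theorem upper (h : UCData φ φ' c₁ C₁ cφ Cφ) (p r : ℝ) :
    φ |p| - φ |r| - awt φ' cφ r * r * (p - r) ≤ C₁ * Cφ / 2 * (p - r) ^ 2 := by
  have h1 := h.upperNN (abs_nonneg p) (abs_nonneg r)
  rw [← h.awt_mul r] at h1
  have ha : awt φ' cφ r ≤ C₁ * Cφ := by
    nlinarith [h.awt_le r, h.Cpos, h.c1_le.2]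
  have hd : 0 ≤ |p| * |r| - p * r := by rw [← abs_mul]; linarith [le_abs_self (p * r)]
  have h2 := mul_le_mul_of_nonneg_right ha hd
  have ep := sq_abs p
  have er := sq_abs r
  have e1 : (p - r) ^ 2 = (|p| - |r|) ^ 2 + 2 * (|p| * |r| - p * r) := by
    linear_combination -ep - er
  have e2 : awt φ' cφ r * r * (p - r) =
      awt φ' cφ r * |r| * (|p| - |r|) - awt φ' cφ r * (|p| * |r| - p * r) := by
    linear_combination awt φ' cφ r * er
  rw [e1, e2]
  linarith

theorem fenchel (h : UCData φ φ' c₁ C₁ cφ Cφ) (r : ℝ) :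
    fenchelConj φ (φ' |r|) = awt φ' cφ r * r ^ 2 - φ |r| := by
  have e : awt φ' cφ r * r ^ 2 = φ' |r| * |r| := by
    rw [← h.awt_mul r, ← sq_abs r]; ring
  rw [e]
  apply IsGreatest.csSup_eq
  refine ⟨⟨|r|, abs_nonneg r, rfl⟩, ?_⟩
  rintro x ⟨s, hs, rfl⟩
  have h1 := h.lowerNN hs (abs_nonneg r)
  have h2 : 0 ≤ c₁ / 2 * awt φ' cφ |r| * (s - |r|) ^ 2 := by
    have := h.awt_ge |r|
    have := h.hcφ
    have := h.hc₁
    have : 0 < awt φ' cφ |r| := by linarith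
    positivity
  linarith

theorem strict (h : UCData φ φ' c₁ C₁ cφ Cφ) : StrictMonoOn φ' (Set.Ici 0) := by
  intro t ht s hs hts
  have h1 := (h.slope ht hts).1
  have hs0 : 0 < s := lt_of_le_of_lt ht hts
  have h2 := h.hN.deriv_pos s hs0
  have h3 := h.hc₁
  have : 0 < s - t := by linarith
  have : 0 < c₁ * (φ' s / s) * (s - t) := by positivity
  linarith

theorem rc (h : UCData φ φ' c₁ C₁ cφ Cφ) {t : ℝ} (ht : 0 ≤ t) : rcInv φ' (φ' t) = t := by
  apply IsGreatest.csSup_eq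
  refine ⟨⟨ht, le_rfl⟩, ?_⟩
  rintro x ⟨hx, hx'⟩
  exact (h.strict.le_iff_le hx ht).mp hx'

theorem cont (h : UCData φ φ' c₁ C₁ cφ Cφ) : ContinuousOn φ' (Set.Ici 0) := by
  have hC : 0 ≤ C₁ := by linarith [h.c1_le.2]
  have key : ∀ t s : ℝ, 0 ≤ t → t ≤ s → |φ' s - φ' t| ≤ C₁ * Cφ * |s - t| := by
    intro t s ht hts
    rcases eq_or_lt_of_le hts with he | hl
    · simp [he]
    · have h2 := (h.slope ht hl).2
      have h3 := h.le_C (ht.trans_lt hl)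
      have h4 : C₁ * (φ' s / s) * (s - t) ≤ C₁ * Cφ * (s - t) :=
          mul_le_mul_of_nonneg_right (mul_le_mul_of_nonneg_left h3 hC) (by linarith)
      have h5 := h.hN.deriv_monotoneOn ht (ht.trans hts) hts
      rw [abs_of_nonneg (by linarith), abs_of_nonneg (by linarith)]
      linarith
  have : LipschitzOnWith (Real.toNNReal (C₁ * Cφ)) φ' (Set.Ici 0) := by
    apply LipschitzOnWith.of_dist_le_mul
    intro x hx y hy
    rw [Real.coe_toNNReal _ (mul_nonneg hC h.Cpos.le), Real.dist_eq, Real.dist_eq]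
    rcases le_total x y with hxy | hxy
    · rw [abs_sub_comm, abs_sub_comm x]; exact key x y hx hxy
    · exact key y x hy hxy
  exact this.continuousOn

theorem surj (h : UCData φ φ' c₁ C₁ cφ Cφ) {y : ℝ} (hy : 0 ≤ y) : ∃ t, 0 ≤ t ∧ φ' t = y := by
  obtain ⟨T, hT⟩ := ((h.hN.deriv_tendsto_atTop.eventually_ge_atTop y).and
    (eventually_ge_atTop 0)).exists
  have := intermediate_value_Icc hT.2 (h.cont.mono Icc_subset_Ici_self)
  obtain ⟨t, ht, e⟩ := this (show y ∈ Icc (φ' 0) (φ' T) from ⟨by rw [h.hN.deriv_zero]; exact hy, hT.1⟩)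
  exact ⟨t, ht.1, e⟩

theorem Lval (h : UCData φ φ' c₁ C₁ cφ Cφ) {w L : ℝ} (hw : 0 < w)
    (hL : Tendsto (fun t : ℝ => rcInv φ' (w⁻¹ * t) / t) (nhdsWithin 0 (Set.Ioi 0)) (nhds L)) :
    L * (w * cφ) = 1 := by
  have h1 : Tendsto (fun s => w * φ' s) (𝓝[>] 0) (𝓝[>] 0) := by
    apply tendsto_nhdsWithin_of_tendsto_nhds_of_eventually_within
    · have := (h.hN.deriv_rightContinuous 0 le_rfl).const_mul w
      simpa [h.hN.deriv_zero] using this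
    · filter_upwards [self_mem_nhdsWithin] with s hs
      exact mul_pos hw (h.hN.deriv_pos s hs)
  have h2 := hL.comp h1
  have h3 : Tendsto (fun s => (w * (φ' s / s))⁻¹) (𝓝[>] 0) (𝓝 (w * cφ)⁻¹) :=
    (h.hlim0.const_mul w).inv₀ (mul_pos hw h.hcφ).ne'
  have h4 : L = (w * cφ)⁻¹ := by
    refine tendsto_nhds_unique (h2.congr' ?_) h3
    filter_upwards [self_mem_nhdsWithin] with s hs
    have hs' : (0:ℝ) < s := hs
    simp only [Function.comp]
    rw [inv_mul_cancel_left₀ hw.ne', h.rc hs'.le]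
    have := h.hN.deriv_pos s hs
    field_simp
  rw [h4]
  exact inv_mul_cancel₀ (mul_pos hw h.hcφ).ne'

theorem exists_r (h : UCData φ φ' c₁ C₁ cφ Cφ) {w L : ℝ} (hw : 0 < w)
    (hL : Tendsto (fun t : ℝ => rcInv φ' (w⁻¹ * t) / t) (nhdsWithin 0 (Set.Ioi 0)) (nhds L))
    (x : ℝ) : ∃ r, w * (awt φ' cφ r * r) = x ∧ quotW φ' w L x * (w * awt φ' cφ r) = 1 := by
  by_cases hx : x = 0
  · refine ⟨0, by simp [hx], ?_⟩
    simp only [quotW, awt, hx, if_true]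
    exact h.Lval hw hL
  · have hx' : 0 < |x| := abs_pos.mpr hx
    obtain ⟨t, ht, e⟩ := h.surj (y := w⁻¹ * |x|) (by positivity)
    have ht0 : 0 < t := by
      rcases eq_or_lt_of_le ht with h0 | h0
      · rw [← h0, h.hN.deriv_zero] at e
        have : 0 < w⁻¹ * |x| := by positivity
        linarith
      · exact h0
    have hr : abs (t * x / |x|) = t := by
      rw [abs_div, abs_mul, abs_abs, abs_of_nonneg ht]; field_simp
    have hr0 : t * x / |x| ≠ 0 := by positivity
    refine ⟨t * x / |x|, ?_, ?_⟩
    · simp only [awt, hr0, if_false, hr, e]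
      field_simp
    · simp only [awt, hr0, if_false, hr, quotW, hx]
      rw [← e, h.rc ht, e]
      field_simp

end UCData

/-- convergence of the primal variable in energy. There is a
constant `C`, depending only on the uniform convexity constants `c₁ ≤ C₁`, with
`J(u_g^{n+1}) − J(u_g) ≤ C (C_φ/c_φ)(J*(σⁿ) − J*(σ))`. -/
theorem primal_energy_convergence (c₁ C₁ : ℝ) (hc₁ : 0 < c₁) (hc₁C₁ : c₁ ≤ C₁) :
    ∃ C : ℝ, 0 < C ∧
    ∀ (φ φ' : ℝ → ℝ), IsNFunction φ φ' →
    (∀ t s : ℝ, 0 ≤ t → t < s →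
      c₁ * (φ' s / s) ≤ (φ' t - φ' s) / (t - s) ∧
      (φ' t - φ' s) / (t - s) ≤ C₁ * (φ' s / s)) →
    (∀ t T : ℝ, 0 < t → t ≤ T → φ' t / t ≤ φ' T / T) →
    ∀ (cφ Cφ : ℝ), 0 < cφ →
    Tendsto (fun t : ℝ => φ' t / t) (nhdsWithin 0 (Set.Ioi 0)) (nhds cφ) →
    Tendsto (fun T : ℝ => φ' T / T) atTop (nhds Cφ) →
    ∀ (N M : ℕ) (B : (Fin N → ℝ) →ₗ[ℝ] (Fin M → ℝ)) (V₀ : Submodule ℝ (Fin N → ℝ)),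
    (∀ v ∈ V₀, B v = 0 → v = 0) →
    ∀ (g f : Fin N → ℝ) (w : Fin M → ℝ), (∀ α, 0 < w α) →
    ∀ (L : Fin M → ℝ),
    (∀ α, Tendsto (fun t : ℝ => rcInv φ' ((w α)⁻¹ * t) / t)
      (nhdsWithin 0 (Set.Ioi 0)) (nhds (L α))) →
    -- primal minimizer u_g = u + g
    ∀ (u : Fin N → ℝ), u ∈ V₀ →
    (∀ v ∈ V₀, primalJ w φ B f (u + g) ≤ primalJ w φ B f (v + g)) →
    -- dual minimizer σ
    ∀ σmin ∈ SigmaF B V₀ f,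
    (∀ τ ∈ SigmaF B V₀ f,
      dualJ w (fenchelConj φ) B g σmin ≤ dualJ w (fenchelConj φ) B g τ) →
    -- one step of the dual IRLS scheme
    ∀ (σn σn1 : Fin M → ℝ) (un1 : Fin N → ℝ),
    σn ∈ SigmaF B V₀ f → σn1 ∈ SigmaF B V₀ f → un1 ∈ V₀ →
    (∀ τ : Fin M → ℝ,
      (∑ α, quotW φ' (w α) (L α) (σn α) * σn1 α * τ α)
        - (∑ α, τ α * B (un1 + g) α) = 0) →
    (∀ v ∈ V₀, (∑ α, σn1 α * B v α) = ∑ i, f i * v i) →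
    primalJ w φ B f (un1 + g) - primalJ w φ B f (u + g) ≤
      C * (Cφ / cφ) *
        (dualJ w (fenchelConj φ) B g σn - dualJ w (fenchelConj φ) B g σmin) := by
  refine ⟨C₁ / c₁, div_pos (hc₁.trans_le hc₁C₁) hc₁, ?_⟩
  intro φ φ' hN huc hmono cφ Cφ hcφ hlim0 hlimT N M B V₀ _ g f w hw L hL u hu humin σmin
    hσmin hσm σn σn1 un1 hσn hσn1 hun1 hsys _
  have h : UCData φ φ' c₁ C₁ cφ Cφ := ⟨hc₁, hN, huc, hmono, hcφ, hlim0, hlimT⟩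
  choose r hr1 hr2 using fun α => h.exists_r (hw α) (hL α) (σn α)
  have hCpos := h.Cpos
  have hC1 : 0 < C₁ := hc₁.trans_le hc₁C₁
  have hapos : ∀ x, 0 < awt φ' cφ x := fun x => h.hcφ.trans_le (h.awt_ge x)
  -- the new flux relation
  have hn1 : ∀ α, σn1 α = w α * awt φ' cφ (r α) * B (un1 + g) α := by
    intro α
    have h1 := hsys (Pi.single α 1)
    simp [Pi.single_apply] at h1
    have h2 := hr2 α
    have h3 : quotW φ' (w α) (L α) (σn α) * σn1 α = B (un1 + g) α := by
      simp; linarith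
    rw [← h3]
    linear_combination (-σn1 α) * h2
  -- the energy difference in terms of Bregman distances
  have hdiff : ∀ v : Fin N → ℝ, primalJ w φ B f (v + g) - primalJ w φ B f (u + g) =
      (∑ α, w α * (φ |B (v + g) α| - φ |B (u + g) α|
        - awt φ' cφ (B (u + g) α) * B (u + g) α * (B (v + g) α - B (u + g) α)))
      + ((∑ α, w α * (awt φ' cφ (B (u + g) α) * B (u + g) α) * B (v - u) α)
        - ∑ i, f i * (v - u) i) := by
    intro v
    have e : ∀ α, B (v + g) α - B (u + g) α = B (v - u) α := by
      intro α; simp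
    simp only [primalJ, e, mul_sub, Finset.sum_sub_distrib, Pi.sub_apply, Pi.add_apply, mul_add,
      Finset.sum_add_distrib, mul_assoc]
    ring
  have hbd : ∀ v : Fin N → ℝ, (∑ α, w α * (φ |B (v + g) α| - φ |B (u + g) α|
        - awt φ' cφ (B (u + g) α) * B (u + g) α * (B (v + g) α - B (u + g) α))) ≤
      C₁ * Cφ / 2 * ∑ α, w α * (B (v - u) α) ^ 2 := by
    intro v
    rw [Finset.mul_sum]
    apply Finset.sum_le_sum
    intro α _
    have h1 := mul_le_mul_of_nonneg_left (h.upper (B (v + g) α) (B (u + g) α)) (hw α).le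
    have e : B (v + g) α - B (u + g) α = B (v - u) α := by simp
    rw [e] at h1 ⊢
    linarith
  -- Euler-Lagrange equation
  have hEL : ∀ v ∈ V₀, (∑ α, w α * (awt φ' cφ (B (u + g) α) * B (u + g) α) * B v α) =
      ∑ i, f i * v i := by
    intro v hv
    set E := (∑ α, w α * (awt φ' cφ (B (u + g) α) * B (u + g) α) * B v α) - ∑ i, f i * v i
      with hE
    set K := C₁ * Cφ / 2 * ∑ α, w α * (B v α) ^ 2 with hK
    have hK0 : 0 ≤ K := mul_nonneg (by positivity)
      (Finset.sum_nonneg fun α _ => mul_nonneg (hw α).le (sq_nonneg _))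
    have key : ∀ t : ℝ, 0 ≤ K * t ^ 2 + t * E := by
      intro t
      have h1 := humin (u + t • v) (V₀.add_mem hu (V₀.smul_mem t hv))
      have h2 := hdiff (u + t • v)
      have h3 := hbd (u + t • v)
      have e0 : u + t • v - u = t • v := by abel
      rw [e0] at h2 h3
      have e1 : C₁ * Cφ / 2 * ∑ α, w α * (B (t • v) α) ^ 2 = K * t ^ 2 := by
        simp only [hK, map_smul, Pi.smul_apply, smul_eq_mul, Finset.mul_sum, Finset.sum_mul]
        exact Finset.sum_congr rfl fun α _ => by ring
      have e2 : (∑ α, w α * (awt φ' cφ (B (u + g) α) * B (u + g) α) * B (t • v) α)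
        - ∑ i, f i * (t • v) i = t * E := by
        simp only [hE, map_smul, Pi.smul_apply, smul_eq_mul, mul_sub, Finset.mul_sum]
        congr 1 <;> exact Finset.sum_congr rfl fun α _ => by ring
      rw [e1] at h3
      rw [e2] at h2
      linarith
    have h4 := key (-E / (2 * (K + 1)))
    have hE0 : E = 0 := by
      have e : K * (-E / (2 * (K + 1))) ^ 2 + (-E / (2 * (K + 1))) * E =
          - (E ^ 2 * ((K + 2) / (4 * (K + 1) ^ 2))) := by
        have : K + 1 ≠ 0 := by positivity
        field_simp
        ring
      rw [e] at h4
      by_contra hne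
      have : 0 < E ^ 2 * ((K + 2) / (4 * (K + 1) ^ 2)) := by positivity
      linarith
    linarith
  -- primal gap
  have hVn : un1 - u ∈ V₀ := V₀.sub_mem hun1 hu
  have hP : primalJ w φ B f (un1 + g) - primalJ w φ B f (u + g) ≤
      C₁ * Cφ / 2 * ∑ α, w α * (B (un1 - u) α) ^ 2 := by
    rw [hdiff un1, hEL _ hVn, sub_self, add_zero]
    exact hbd un1
  -- projection
  have hproj : ∑ α, w α * awt φ' cφ (r α) * (B (un1 - u) α) ^ 2 ≤
      ∑ α, w α * awt φ' cφ (r α) * (B (u + g) α - r α) ^ 2 := by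
    have o1 := hσn1 _ hVn
    have o2 := hσn _ hVn
    have o3 : ∑ α, (σn1 α - σn α) * B (un1 - u) α = 0 := by
      simp only [sub_mul, Finset.sum_sub_distrib]
      rw [o1, o2, sub_self]
    have o4 : ∑ α, w α * awt φ' cφ (r α) * (B (u + g) α - r α) ^ 2 =
        ∑ α, w α * awt φ' cφ (r α) * (B (un1 - u) α) ^ 2 +
        ∑ α, w α * awt φ' cφ (r α) * (B (un1 + g) α - r α) ^ 2 -
        2 * ∑ α, (σn1 α - σn α) * B (un1 - u) α := by
      rw [Finset.mul_sum, ← Finset.sum_add_distrib, ← Finset.sum_sub_distrib]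
      apply Finset.sum_congr rfl
      intro α _
      rw [hn1 α, ← hr1 α]
      have e : B (un1 - u) α = B (un1 + g) α - B (u + g) α := by simp
      rw [e]
      ring
    rw [o4, o3]
    have : 0 ≤ ∑ α, w α * awt φ' cφ (r α) * (B (un1 + g) α - r α) ^ 2 :=
      Finset.sum_nonneg fun α _ =>
        mul_nonneg (mul_nonneg (hw α).le (hapos _).le) (sq_nonneg _)
    linarith
  -- comparison of the weights
  have hwt : cφ * ∑ α, w α * (B (un1 - u) α) ^ 2 ≤
      ∑ α, w α * awt φ' cφ (r α) * (B (un1 - u) α) ^ 2 := by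
    rw [Finset.mul_sum]
    apply Finset.sum_le_sum
    intro α _
    have := mul_le_mul_of_nonneg_right (h.awt_ge (r α))
      (mul_nonneg (hw α).le (sq_nonneg (B (un1 - u) α)))
    linarith
  -- dual gap
  have hD : c₁ / 2 * ∑ α, w α * awt φ' cφ (r α) * (B (u + g) α - r α) ^ 2 ≤
      dualJ w (fenchelConj φ) B g σn - dualJ w (fenchelConj φ) B g σmin := by
    have d1 := hσm (fun α => w α * (awt φ' cφ (B (u + g) α) * B (u + g) α)) hEL
    have conj : ∀ α x, w α * fenchelConj φ ((w α)⁻¹ * |w α * (awt φ' cφ x * x)|) =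
        w α * (awt φ' cφ x * x ^ 2 - φ |x|) := by
      intro α x
      rw [abs_mul, abs_mul, abs_of_pos (hw α), abs_of_pos (hapos x),
        inv_mul_cancel_left₀ (hw α).ne', h.awt_mul, h.fenchel]
    have o1 := hEL u hu
    have o2 := hσn u hu
    have hσn' : σn = fun α => w α * (awt φ' cφ (r α) * r α) := funext fun α => (hr1 α).symm
    rw [hσn'] at o2 ⊢
    simp only [dualJ, conj] at d1 ⊢
    have d2 : c₁ / 2 * ∑ α, w α * awt φ' cφ (r α) * (B (u + g) α - r α) ^ 2 ≤
        ∑ α, (w α * (awt φ' cφ (r α) * r α ^ 2 - φ |r α|)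
          - w α * (awt φ' cφ (r α) * r α) * B g α
          - w α * (awt φ' cφ (B (u + g) α) * (B (u + g) α) ^ 2 - φ |B (u + g) α|)
          + w α * (awt φ' cφ (B (u + g) α) * B (u + g) α) * B g α
          - w α * (awt φ' cφ (r α) * r α) * B u α
          + w α * (awt φ' cφ (B (u + g) α) * B (u + g) α) * B u α) := by
      rw [Finset.mul_sum]
      apply Finset.sum_le_sum
      intro α _
      have h1 := mul_le_mul_of_nonneg_left (h.lower (B (u + g) α) (r α)) (hw α).le
      have e : B g α = B (u + g) α - B u α := by simp
      rw [e]
      linarith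
    simp only [Finset.sum_add_distrib, Finset.sum_sub_distrib] at d2
    linarith
  -- conclusion
  set S := ∑ α, w α * (B (un1 - u) α) ^ 2
  set D := dualJ w (fenchelConj φ) B g σn - dualJ w (fenchelConj φ) B g σmin
  have hS : S ≤ 2 / (c₁ * cφ) * D := by
    rw [div_mul_eq_mul_div, le_div_iff₀ (by positivity)]
    have h1 : cφ * S ≤ ∑ α, w α * awt φ' cφ (r α) * (B (u + g) α - r α) ^ 2 :=
      hwt.trans hproj
    have h2 := mul_le_mul_of_nonneg_left h1 hc₁.le
    linarith
  calc _ ≤ C₁ * Cφ / 2 * S := hP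
    _ ≤ C₁ * Cφ / 2 * (2 / (c₁ * cφ) * D) := mul_le_mul_of_nonneg_left hS (by positivity)
    _ = _ := by field_simp
end
end

section
/- Let φ be a uniformly convex N-function such that t ↦ φ'(t)/t is non-decreasing on (0,∞). Let B: ℝᴺ → ℝᴹ be linear, V₀ ⊆ ℝᴺ with ker(B) ∩ V₀ = {0}, g, f ∈ ℝᴺ, w ∈ (0,∞)ᴹ. Let u_g minimize J over g + V₀, σ minimize J* over Σ_f, and let σⁿ ∈ Σ_f, σⁿ⁺¹ ∈ Σ_f, uⁿ⁺¹ ∈ V₀ satisfy the dual IRLS saddle-point system. Set zⁿ_α := A_{φ*}(w_α⁻¹ σⁿ_α) and u_g^{n+1} := uⁿ⁺¹ + g. Then there exists a constant C < ∞ depending only on the uniform convexity constants of φ such that Σ_α w_α |V_φ((B u_g)_α) − V_φ(zⁿ_α)|² + Σ_α w_α (φ'(|zⁿ_α|)/|zⁿ_α|)·|zⁿ_α − (B u_g^{n+1})_α|² ≤ C·(J*(σⁿ) − J*(σ)). -/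
open Filter MeasureTheory Set Topology

noncomputable section

structure PHyp (c C : ℝ) (F p : ℝ → ℝ) : Prop where
  hc : 0 < c
  hcC : c ≤ C
  F0 : F 0 = 0
  p0 : p 0 = 0
  pos : ∀ t, 0 < t → 0 < p t
  sub : ∀ a b, 0 ≤ a → 0 ≤ b → F a + p a * (b - a) ≤ F b
  lo : ∀ t s, 0 ≤ t → t < s → c * (p s / s) * (s - t) ≤ p s - p t
  up : ∀ t s, 0 ≤ t → t < s → p s - p t ≤ C * (p s / s) * (s - t)
  km : ∀ t T : ℝ, 0 < t → t ≤ T → p t / t ≤ p T / T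
  cont : ContinuousOn p (Set.Ici 0)
  top : Filter.Tendsto p Filter.atTop Filter.atTop

theorem PHyp.of {c C : ℝ} (hc : 0 < c) (hcC : c ≤ C) {F p : ℝ → ℝ} (h : IsNFunction F p)
    (hu : ∀ t s : ℝ, 0 ≤ t → t < s →
      c * (p s / s) ≤ (p t - p s) / (t - s) ∧
      (p t - p s) / (t - s) ≤ C * (p s / s))
    (hk : ∀ t T : ℝ, 0 < t → t ≤ T → p t / t ≤ p T / T) : PHyp c C F p := by
  have e : ∀ t s : ℝ, (p t - p s) / (t - s) = (p s - p t) / (s - t) := by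
    intro t s
    rw [← neg_sub (p s), ← neg_sub s t, neg_div_neg_eq]
  have lo : ∀ t s, 0 ≤ t → t < s → c * (p s / s) * (s - t) ≤ p s - p t := by
    intro t s ht hts
    have := (hu t s ht hts).1
    rw [e, le_div_iff₀ (by linarith)] at this
    exact this
  have up : ∀ t s, 0 ≤ t → t < s → p s - p t ≤ C * (p s / s) * (s - t) := by
    intro t s ht hts
    have := (hu t s ht hts).2
    rw [e, div_le_iff₀ (by linarith)] at this
    exact this
  have hC : 0 < C := by linarith
  have ii : ∀ a b, 0 ≤ a → 0 ≤ b → IntervalIntegrable p volume a b := by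
    intro a b ha hb
    apply MonotoneOn.intervalIntegrable
    apply h.deriv_monotoneOn.mono
    intro x hx
    rw [Set.mem_uIcc] at hx
    simp only [Set.mem_Ici]
    rcases hx with hx | hx <;> linarith [hx.1]
  have sub : ∀ a b, 0 ≤ a → 0 ≤ b → F a + p a * (b - a) ≤ F b := by
    intro a b ha hb
    have hd : F b - F a = ∫ s in a..b, p s := by
      rw [h.eq_integral a ha, h.eq_integral b hb]
      exact intervalIntegral.integral_interval_sub_left (ii 0 b le_rfl hb) (ii 0 a le_rfl ha)
    rcases le_total a b with hab | hab
    · have := intervalIntegral.integral_mono_on (f := fun _ => p a) (g := p) hab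
        (by simp) (ii a b ha hb)
        (fun x hx => h.deriv_monotoneOn (by simpa using ha)
          (by simp only [Set.mem_Ici]; linarith [hx.1]) hx.1)
      simp at this
      nlinarith
    · have := intervalIntegral.integral_mono_on (f := p) (g := fun _ => p a) hab
        (ii b a hb ha) (by simp)
        (fun x hx => h.deriv_monotoneOn (by simp only [Set.mem_Ici]; linarith [hx.1])
          (by simpa using ha) hx.2)
      rw [intervalIntegral.integral_symm] at this
      simp at this
      nlinarith
  have lipaux : ∀ T, 0 < T → ∀ t s, 0 ≤ t → t ≤ s → s ≤ T → |p s - p t| ≤ C * (p T / T) * (s - t) := by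
    intro T hT t s ht hts hs
    rw [abs_of_nonneg (sub_nonneg.2 (h.deriv_monotoneOn (by simpa using ht)
      (by simpa using ht.trans hts) hts))]
    rcases hts.eq_or_lt with rfl | hlt
    · simp
    · refine (up t s ht hlt).trans ?_
      have h1 := hk s T (by linarith) hs
      have : 0 ≤ s - t := by linarith
      gcongr
  have cont : ContinuousOn p (Set.Ici 0) := by
    intro x hx
    have hx : 0 ≤ x := hx
    have hT : 0 < x + 1 := by linarith
    have L : LipschitzOnWith (C * (p (x+1) / (x+1))).toNNReal p (Set.Icc 0 (x+1)) := by
      apply LipschitzOnWith.of_dist_le_mul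
      intro a ha b hb
      have := h.deriv_pos _ hT
      rw [Real.coe_toNNReal _ (by positivity), Real.dist_eq, Real.dist_eq]
      rcases le_total a b with hab | hab
      · rw [abs_sub_comm, abs_sub_comm a, abs_of_nonneg (sub_nonneg.2 hab)]
        exact lipaux _ hT a b ha.1 hab hb.2
      · rw [abs_of_nonneg (sub_nonneg.2 hab)]
        exact lipaux _ hT b a hb.1 hab ha.2
    have hc := L.continuousOn x ⟨hx, by linarith⟩
    apply hc.mono_of_mem_nhdsWithin
    have : Set.Icc 0 (x+1) = Set.Ici 0 ∩ Set.Iic (x+1) := rfl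
    rw [this]
    exact Filter.inter_mem self_mem_nhdsWithin
      (mem_nhdsWithin_of_mem_nhds (Iic_mem_nhds (by linarith)))
  exact ⟨hc, hcC, by rw [h.eq_integral 0 le_rfl]; simp, h.deriv_zero, h.deriv_pos, sub, lo, up, hk,
    cont, h.deriv_tendsto_atTop⟩

namespace PHyp
variable {c C : ℝ} {F p : ℝ → ℝ}

theorem nonneg (h : PHyp c C F p) {t : ℝ} (ht : 0 ≤ t) : 0 ≤ p t := by
  rcases ht.eq_or_lt with rfl | h1
  · rw [h.p0]
  · exact (h.pos t h1).le

theorem smono (h : PHyp c C F p) {t s : ℝ} (ht : 0 ≤ t) (hts : t < s) : p t < p s := by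
  have := h.lo t s ht hts
  have h1 := h.pos s (by linarith)
  have h2 := h.hc
  have h3 : 0 < s := by linarith
  have h4 : 0 < s - t := by linarith
  have : 0 < c * (p s / s) * (s - t) := by positivity
  linarith

theorem mono (h : PHyp c C F p) {t s : ℝ} (ht : 0 ≤ t) (hts : t ≤ s) : p t ≤ p s := by
  rcases hts.eq_or_lt with rfl | h1
  · exact le_rfl
  · exact (h.smono ht h1).le

theorem inv (h : PHyp c C F p) {s : ℝ} (hs : 0 ≤ s) : rcInv p (p s) = s := by
  unfold rcInv
  have : {r : ℝ | 0 ≤ r ∧ p r ≤ p s} = Set.Icc 0 s := by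
    ext r
    simp only [Set.mem_ofPred_eq, Set.mem_Icc]
    constructor
    · rintro ⟨h1, h2⟩
      refine ⟨h1, ?_⟩
      by_contra hlt
      push Not at hlt
      linarith [h.smono hs hlt]
    · rintro ⟨h1, h2⟩
      exact ⟨h1, h.mono h1 h2⟩
  rw [this, csSup_Icc hs]

theorem surj (h : PHyp c C F p) {r : ℝ} (hr : 0 ≤ r) : ∃ s, 0 ≤ s ∧ p s = r := by
  obtain ⟨T, hT0, hT⟩ := ((Filter.eventually_ge_atTop (0:ℝ)).and
    (h.top.eventually_ge_atTop r)).exists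
  have := intermediate_value_Icc hT0 (h.cont.mono (fun x hx => hx.1))
  obtain ⟨s, hs, rfl⟩ := this ⟨by rw [h.p0]; exact hr, hT⟩
  exact ⟨s, hs.1, rfl⟩

theorem conj (h : PHyp c C F p) {s : ℝ} (hs : 0 ≤ s) : fenchelConj F (p s) = p s * s - F s := by
  unfold fenchelConj
  apply IsLUB.csSup_eq
  · constructor
    · rintro x ⟨t, ht, rfl⟩
      have := h.sub s t hs ht
      nlinarith
    · intro b hb
      exact hb ⟨s, hs, rfl⟩
  · exact ⟨_, s, hs, rfl⟩

/-- lower Bregman bound, nonneg case -/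
theorem breg1 (h : PHyp c C F p) {y z : ℝ} (hz : 0 ≤ z) (hy : 0 ≤ y) :
    c ^ 2 / (4 * C) * (p (max y z) / max y z) * (y - z) ^ 2 ≤ F y - F z - p z * (y - z) := by
  have hc := h.hc
  have hC : 0 < C := by linarith [h.hcC]
  rcases lt_trichotomy y z with hyz | rfl | hyz
  · rw [max_eq_right hyz.le]
    have h1 := h.sub ((z+y)/2) y (by linarith) hy
    have h2 := h.sub z ((z+y)/2) hz (by linarith)
    have h3 := h.lo ((z+y)/2) z (by linarith) (by linarith)
    have h5 := h.nonneg hz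
    set k := p z / z
    have hk : 0 ≤ k := by positivity
    have h4 : c ^ 2 / (4 * C) ≤ c / 4 := by
      rw [div_le_div_iff₀ (by positivity) (by positivity)]
      nlinarith [h.hcC]
    have h6 : c ^ 2 / (4 * C) * k * (y - z) ^ 2 ≤ c / 4 * k * (y - z) ^ 2 := by gcongr
    have h7 : c * k * (z - (z+y)/2) * ((z-y)/2) ≤ (p z - p ((z+y)/2)) * ((z-y)/2) :=
      mul_le_mul_of_nonneg_right h3 (by linarith)
    nlinarith
  · simp
  · rw [max_eq_left hyz.le]
    have hd0 : 0 < c / (2 * C) := by positivity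
    have hd1 : c / (2 * C) < 1 := by
      rw [div_lt_one (by positivity)]; linarith [h.hcC]
    have hdC : C * (c / (2 * C)) = c / 2 := by field_simp
    have he : c ^ 2 / (4 * C) = c / 2 * (c / (2 * C)) := by field_simp; norm_num
    rw [he]
    set d := c / (2 * C)
    have hdp : 0 < d * (y - z) := mul_pos hd0 (by linarith)
    have hdl : d * (y - z) < y - z := by nlinarith
    have h1 := h.sub (y - d * (y - z)) y (by linarith) hy
    have h2 := h.sub z (y - d * (y - z)) hz (by linarith)
    have h3 := h.lo z y hz hyz
    have h4 := h.up (y - d * (y - z)) y (by linarith) (by linarith)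
    set k := p y / y
    set s := y - d * (y - z) with hs
    have e1 : C * k * (y - s) = c / 2 * k * (y - z) := by
      rw [← hdC, hs]; ring
    rw [e1] at h4
    have h7 : c / 2 * k * (y - z) * (d * (y - z)) ≤ (p s - p z) * (d * (y - z)) :=
      mul_le_mul_of_nonneg_right (by linarith) hdp.le
    have e2 : y - s = d * (y - z) := by rw [hs]; ring
    rw [e2] at h1
    have e3 : s - z = (y - z) - d * (y - z) := by rw [hs]; ring
    rw [e3] at h2
    nlinarith

end PHyp

/-- signed derivative -/
def sA (p : ℝ → ℝ) (t : ℝ) : ℝ := p (max t 0) - p (max (-t) 0)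

namespace PHyp
variable {c C : ℝ} {F p : ℝ → ℝ}

theorem sA_neg (t : ℝ) : sA p (-t) = - sA p t := by
  unfold sA; rw [neg_neg]; ring

theorem sA_nonneg (h : PHyp c C F p) {t : ℝ} (ht : 0 ≤ t) : sA p t = p t := by
  unfold sA
  rw [max_eq_left ht, max_eq_right (by linarith), h.p0, sub_zero]

theorem sA_cont (h : PHyp c C F p) : Continuous (sA p) := by
  unfold sA
  apply Continuous.sub
  · exact h.cont.comp_continuous (by fun_prop) (fun x => by simp)
  · exact h.cont.comp_continuous (by fun_prop) (fun x => by simp)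

theorem abs_sA (h : PHyp c C F p) (t : ℝ) : |sA p t| = p |t| := by
  rcases le_total 0 t with ht | ht
  · rw [h.sA_nonneg ht, abs_of_nonneg ht, abs_of_nonneg (h.nonneg ht)]
  · have := h.sA_nonneg (t := -t) (by linarith)
    rw [sA_neg] at this
    rw [← abs_neg, this, abs_of_nonpos ht, abs_of_nonneg (h.nonneg (by linarith))]

theorem sA_mul (h : PHyp c C F p) (t : ℝ) : sA p t * t = p |t| * |t| := by
  rcases le_total 0 t with ht | ht
  · rw [h.sA_nonneg ht, abs_of_nonneg ht]
  · have := h.sA_nonneg (t := -t) (by linarith)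
    rw [sA_neg] at this
    rw [abs_of_nonpos ht, ← this]; ring

theorem sA_eq (h : PHyp c C F p) {t : ℝ} (ht : t ≠ 0) : sA p t = p |t| / |t| * t := by
  rcases lt_or_gt_of_ne ht with ht | ht
  · have := h.sA_nonneg (t := -t) (by linarith)
    rw [sA_neg] at this
    rw [abs_of_neg ht, ← this]; field_simp
  · rw [h.sA_nonneg ht.le, abs_of_pos ht]; field_simp

theorem sA_sub (h : PHyp c C F p) (a b : ℝ) : F |a| + sA p a * (b - a) ≤ F |b| := by
  have h1 := h.sub |a| |b| (abs_nonneg a) (abs_nonneg b)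
  have h2 := h.sA_mul a
  have h3 : sA p a * b ≤ p |a| * |b| := by
    rw [← h.abs_sA, ← abs_mul]; exact le_abs_self _
  nlinarith

/-- for every real r there is z with sA z = r, and Aphi (rcInv p) r = z -/
theorem sA_surj (h : PHyp c C F p) (r : ℝ) :
    sA p (Aphi (rcInv p) r) = r ∧ rcInv p |r| = |Aphi (rcInv p) r| := by
  unfold Aphi
  obtain ⟨s, hs, hsr⟩ := h.surj (abs_nonneg r)
  rw [← hsr, h.inv hs]
  split_ifs with h0
  · rw [h0, abs_zero, ← h.p0] at hsr
    have : s = 0 := by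
      rw [← h.inv hs, hsr, h.inv le_rfl]
    subst this
    constructor
    · rw [h.sA_nonneg le_rfl, h.p0, h0]
    · simp
  · rw [hsr]
    have hr : 0 < |r| := abs_pos.2 h0
    constructor
    · rcases lt_or_gt_of_ne h0 with h1 | h1
      · have e : s / |r| * r = - s := by
          rw [abs_of_neg h1]; field_simp
        rw [e, sA_neg, h.sA_nonneg hs, hsr, abs_of_neg h1]; ring
      · have e : s / |r| * r = s := by
          rw [abs_of_pos h1]; field_simp
        rw [e, h.sA_nonneg hs, hsr, abs_of_pos h1]
    · rw [abs_mul, abs_div, abs_abs, abs_of_nonneg hs]; field_simp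

theorem breg_opp (h : PHyp c C F p) {b z : ℝ} (hz : 0 ≤ z) (hb : 0 ≤ b) :
    c ^ 2 / (16 * C) * (p (max b z) / max b z) * (b + z) ^ 2 ≤ F b - F z + p z * (b + z) := by
  have hc := h.hc
  have hC : 0 < C := by linarith [h.hcC]
  have h1 := h.breg1 (y := b) (z := 0) le_rfl hb
  have h2 := h.breg1 (y := 0) (z := z) hz le_rfl
  rw [max_eq_left hb, h.p0, h.F0] at h1
  rw [max_eq_right hz, h.F0] at h2
  have h3 := mul_nonneg (h.nonneg hz) hb
  have hkb : 0 ≤ p b / b := div_nonneg (h.nonneg hb) hb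
  have hkz : 0 ≤ p z / z := div_nonneg (h.nonneg hz) hz
  have e : c ^ 2 / (16 * C) = c ^ 2 / (4 * C) / 4 := by field_simp; norm_num
  rw [e]
  have hq : 0 < c ^ 2 / (4 * C) := by positivity
  set q := c ^ 2 / (4 * C)
  have t1 : 0 ≤ q * (p b / b) * b ^ 2 := by positivity
  have t2 : 0 ≤ q * (p z / z) * z ^ 2 := by positivity
  rcases le_total b z with hbz | hbz
  · rw [max_eq_right hbz]
    have : q / 4 * (p z / z) * (b + z) ^ 2 ≤ q / 4 * (p z / z) * (2 * z) ^ 2 := by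
      gcongr; linarith
    nlinarith
  · rw [max_eq_left hbz]
    have : q / 4 * (p b / b) * (b + z) ^ 2 ≤ q / 4 * (p b / b) * (2 * b) ^ 2 := by
      gcongr; linarith
    nlinarith

theorem breg_pos (h : PHyp c C F p) {y z : ℝ} (hz : 0 ≤ z) :
    c ^ 2 / (16 * C) * (p (max |y| |z|) / max |y| |z|) * (y - z) ^ 2
      ≤ F |y| - F |z| - sA p z * (y - z) := by
  have hc := h.hc
  have hC : 0 < C := by linarith [h.hcC]
  rw [h.sA_nonneg hz, abs_of_nonneg hz]
  rcases le_total 0 y with hy | hy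
  · rw [abs_of_nonneg hy]
    refine le_trans ?_ (h.breg1 hz hy)
    have : 0 ≤ p (max y z) / max y z :=
      div_nonneg (h.nonneg (le_max_of_le_left hy)) (le_max_of_le_left hy)
    gcongr
    norm_num
  · rw [abs_of_nonpos hy]
    have := h.breg_opp (b := -y) hz (by linarith)
    have e : (-y + z) ^ 2 = (y - z) ^ 2 := by ring
    rw [e] at this
    linarith

theorem breg (h : PHyp c C F p) (y z : ℝ) :
    c ^ 2 / (16 * C) * (p (max |y| |z|) / max |y| |z|) * (y - z) ^ 2
      ≤ F |y| - F |z| - sA p z * (y - z) := by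
  rcases le_total 0 z with hz | hz
  · exact h.breg_pos hz
  · have := h.breg_pos (y := -y) (z := -z) (by linarith)
    rw [abs_neg, abs_neg, sA_neg] at this
    have e : (-y - -z) ^ 2 = (y - z) ^ 2 := by ring
    rw [e] at this
    linarith

theorem V_neg (t : ℝ) : Vphi p (-t) = - Vphi p t := by
  unfold Vphi; simp only [abs_neg, neg_eq_zero]; split_ifs <;> simp

theorem V_sq (h : PHyp c C F p) (t : ℝ) : Vphi p t ^ 2 = p |t| / |t| * t ^ 2 := by
  unfold Vphi
  split_ifs with h0
  · simp [h0]
  · rw [mul_pow, Real.sq_sqrt (div_nonneg (h.nonneg (abs_nonneg t)) (abs_nonneg t))]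

theorem V_nonneg {t : ℝ} (ht : 0 ≤ t) : 0 ≤ Vphi p t := by
  unfold Vphi
  split_ifs
  · exact le_rfl
  · positivity

theorem V_same (h : PHyp c C F p) {a b : ℝ} (ha : 0 ≤ a) (hab : a ≤ b) :
    (Vphi p b - Vphi p a) ^ 2 ≤ (1 + C) ^ 2 * (p b / b) * (b - a) ^ 2 := by
  have hC : 0 < C := by linarith [h.hcC, h.hc]
  rcases hab.eq_or_lt with rfl | hlt
  · simp
  have hb : 0 < b := by linarith
  have hpb := h.pos b hb
  have hVa := V_nonneg (p := p) ha
  have hVb := V_nonneg (p := p) hb.le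
  have sa := h.V_sq a
  have sb := h.V_sq b
  rw [abs_of_nonneg ha] at sa
  rw [abs_of_pos hb] at sb
  have sa' : Vphi p a ^ 2 = p a * a := by
    rw [sa]
    rcases ha.eq_or_lt with rfl | h1
    · simp
    · field_simp
  have sb' : Vphi p b ^ 2 = p b * b := by
    rw [sb]; field_simp
  have hm := h.mono ha hab
  have hpa := h.nonneg ha
  have hle : Vphi p a ≤ Vphi p b := by
    apply le_of_sq_le_sq _ hVb
    rw [sa', sb']
    exact mul_le_mul hm hab ha hpb.le
  have hup := h.up a b ha hlt
  set k := p b / b with hk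
  have hkp : 0 < k := by positivity
  have hpk : p b = k * b := by rw [hk]; field_simp
  have hVbp : 0 < Vphi p b := by
    have : 0 < Vphi p b ^ 2 := by rw [sb']; positivity
    exact lt_of_le_of_ne hVb (by rintro h0; rw [← h0] at this; simp at this)
  -- key: (Vb - Va) * Vb ≤ (1+C) k b (b-a)
  have key : (Vphi p b - Vphi p a) * Vphi p b ≤ (1 + C) * k * b * (b - a) := by
    have h1 : (Vphi p b - Vphi p a) * Vphi p b ≤ Vphi p b ^ 2 - Vphi p a ^ 2 := by
      nlinarith [mul_nonneg hVa (sub_nonneg.2 hle)]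
    have h2 : a * (p b - p a) ≤ b * (C * k * (b - a)) := by
      apply mul_le_mul hab hup (by linarith) hb.le
    have h3 : p b * b - p a * a = p b * (b - a) + a * (p b - p a) := by ring
    rw [sa', sb', h3] at h1
    rw [hpk] at h1 h2
    nlinarith
  have key2 : ((Vphi p b - Vphi p a) * Vphi p b) ^ 2 ≤ ((1 + C) * k * b * (b - a)) ^ 2 :=
    pow_le_pow_left₀ (mul_nonneg (sub_nonneg.2 hle) hVb) key 2
  have e1 : ((1 + C) * k * b * (b - a)) ^ 2 = ((1 + C) ^ 2 * k * (b - a) ^ 2) * (k * b ^ 2) := by ring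
  rw [mul_pow, e1, sb] at key2
  exact le_of_mul_le_mul_right key2 (by positivity)

theorem k_mono0 (h : PHyp c C F p) {a b : ℝ} (ha : 0 ≤ a) (hab : a ≤ b) : p a / a ≤ p b / b := by
  rcases ha.eq_or_lt with rfl | h1
  · simp; exact div_nonneg (h.nonneg hab) hab
  · exact h.km a b h1 hab

theorem V_pos (h : PHyp c C F p) {y z : ℝ} (hz : 0 ≤ z) :
    (Vphi p y - Vphi p z) ^ 2
      ≤ ((1 + C) ^ 2 + 2) * (p (max |y| |z|) / max |y| |z|) * (y - z) ^ 2 := by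
  have hm0 : 0 ≤ max |y| |z| := le_max_of_le_left (abs_nonneg y)
  have hk : 0 ≤ p (max |y| |z|) / max |y| |z| := div_nonneg (h.nonneg hm0) hm0
  have hk2 := mul_nonneg hk (sq_nonneg (y - z))
  rcases le_total 0 y with hy | hy
  · rw [abs_of_nonneg hz, abs_of_nonneg hy] at *
    rcases le_total y z with hyz | hyz
    · rw [max_eq_right hyz] at *
      have := h.V_same hy hyz
      nlinarith
    · rw [max_eq_left hyz] at *
      have := h.V_same hz hyz
      nlinarith
  · have hyk := h.k_mono0 (abs_nonneg y) (le_max_left |y| |z|)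
    have hzk := h.k_mono0 (abs_nonneg z) (le_max_right |y| |z|)
    have sy := h.V_sq y
    have sz := h.V_sq z
    set k := p (max |y| |z|) / max |y| |z|
    have h1 := mul_le_mul_of_nonneg_right hyk (sq_nonneg y)
    have h2 := mul_le_mul_of_nonneg_right hzk (sq_nonneg z)
    have h3 : y ^ 2 + z ^ 2 ≤ (y - z) ^ 2 := by nlinarith [mul_nonneg hz (neg_nonneg.2 hy)]
    have h4 := mul_le_mul_of_nonneg_left h3 hk
    have h5 : 0 ≤ (1 + C) ^ 2 * (k * (y - z) ^ 2) := by positivity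
    nlinarith [sq_nonneg (Vphi p y + Vphi p z)]

theorem V_all (h : PHyp c C F p) (y z : ℝ) :
    (Vphi p y - Vphi p z) ^ 2
      ≤ ((1 + C) ^ 2 + 2) * (p (max |y| |z|) / max |y| |z|) * (y - z) ^ 2 := by
  rcases le_total 0 z with hz | hz
  · exact h.V_pos hz
  · have := h.V_pos (y := -y) (z := -z) (by linarith)
    rw [abs_neg, abs_neg, V_neg, V_neg] at this
    have e : (-y - -z) ^ 2 = (y - z) ^ 2 := by ring
    have e' : (-Vphi p y - -Vphi p z) ^ 2 = (Vphi p y - Vphi p z) ^ 2 := by ring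
    rw [e, e'] at this
    exact this

theorem L_bound (h : PHyp c C F p) {w L : ℝ} (hw : 0 < w)
    (hL : Tendsto (fun t : ℝ => rcInv p (w⁻¹ * t) / t) (nhdsWithin 0 (Set.Ioi 0)) (nhds L))
    {m : ℝ} (hm : 0 < m) : 1 ≤ L * (w * (p m / m)) := by
  have hpm := h.pos m hm
  have : (w * (p m / m))⁻¹ ≤ L := by
    apply ge_of_tendsto hL
    have hmem : Set.Ioo 0 (w * p m) ∈ nhdsWithin (0:ℝ) (Set.Ioi 0) :=
      Ioo_mem_nhdsGT (by positivity)
    filter_upwards [hmem] with t ht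
    have ht0 : 0 < t := ht.1
    obtain ⟨s, hs, hst⟩ := h.surj (r := w⁻¹ * t) (by positivity)
    rw [← hst, h.inv hs]
    have hs0 : 0 < s := by
      rcases hs.eq_or_lt with rfl | h1
      · rw [h.p0] at hst
        have : 0 < w⁻¹ * t := by positivity
        linarith
      · exact h1
    have hsm : s ≤ m := by
      by_contra hlt
      push Not at hlt
      have h1 := h.smono hm.le hlt
      rw [hst, ← div_eq_inv_mul, lt_div_iff₀ hw] at h1
      linarith [ht.2]
    have hk := h.km s m hs0 hsm
    have ht' : t = w * p s := by rw [hst]; field_simp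
    have hps := h.pos s hs0
    have e : s / t = (w * (p s / s))⁻¹ := by rw [ht']; field_simp
    rw [e]
    gcongr
  rw [inv_le_iff_one_le_mul₀ (by positivity)] at this
  exact this

end PHyp

theorem opt_aux {c C : ℝ} {F p : ℝ → ℝ} (h : PHyp c C F p) {N M : ℕ}
    (B : (Fin N → ℝ) →ₗ[ℝ] (Fin M → ℝ)) (V₀ : Submodule ℝ (Fin N → ℝ))
    (g f : Fin N → ℝ) (w : Fin M → ℝ) (hw : ∀ α, 0 < w α) (u : Fin N → ℝ) (hu : u ∈ V₀)
    (hmin : ∀ v ∈ V₀, primalJ w F B f (u + g) ≤ primalJ w F B f (v + g))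
    (v : Fin N → ℝ) (hv : v ∈ V₀) :
    ∑ i, f i * v i ≤ ∑ α, w α * sA p (B (u + g) α) * B v α := by
  have hsc := h.sA_cont
  have hcont : Continuous (fun t : ℝ => ∑ α, w α * sA p (B (u + g) α + t * B v α) * B v α) := by
    fun_prop
  have ht : Tendsto (fun t : ℝ => ∑ α, w α * sA p (B (u + g) α + t * B v α) * B v α)
      (nhdsWithin 0 (Set.Ioi 0)) (nhds (∑ α, w α * sA p (B (u + g) α) * B v α)) := by
    have := hcont.tendsto 0
    simp only [zero_mul, add_zero] at this
    exact this.mono_left nhdsWithin_le_nhds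
  apply ge_of_tendsto ht
  filter_upwards [self_mem_nhdsWithin] with t ht0
  have ht0 : 0 < t := ht0
  have h1 := hmin (u + t • v) (V₀.add_mem hu (V₀.smul_mem t hv))
  unfold primalJ at h1
  have e1 : ∀ α, B (u + t • v + g) α = B (u + g) α + t * B v α := by
    intro α; simp; ring
  have e2 : ∑ i, f i * (u + t • v + g) i = ∑ i, f i * (u + g) i + t * ∑ i, f i * v i := by
    rw [Finset.mul_sum, ← Finset.sum_add_distrib]
    apply Finset.sum_congr rfl
    intro i _
    simp; ring
  rw [e2] at h1
  simp only [e1] at h1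
  have h2 : ∑ α, w α * F |B (u + g) α + t * B v α| ≤ ∑ α, w α * F |B (u + g) α|
      + t * ∑ α, w α * sA p (B (u + g) α + t * B v α) * B v α := by
    rw [Finset.mul_sum, ← Finset.sum_add_distrib]
    apply Finset.sum_le_sum
    intro α _
    have h3 := h.sA_sub (B (u + g) α + t * B v α) (B (u + g) α)
    have := mul_le_mul_of_nonneg_left h3 (hw α).le
    linarith
  have : t * ∑ i, f i * v i ≤ t * ∑ α, w α * sA p (B (u + g) α + t * B v α) * B v α := by linarith
  exact le_of_mul_le_mul_left this ht0

theorem opt {c C : ℝ} {F p : ℝ → ℝ} (h : PHyp c C F p) {N M : ℕ}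
    (B : (Fin N → ℝ) →ₗ[ℝ] (Fin M → ℝ)) (V₀ : Submodule ℝ (Fin N → ℝ))
    (g f : Fin N → ℝ) (w : Fin M → ℝ) (hw : ∀ α, 0 < w α) (u : Fin N → ℝ) (hu : u ∈ V₀)
    (hmin : ∀ v ∈ V₀, primalJ w F B f (u + g) ≤ primalJ w F B f (v + g)) :
    (fun α => w α * sA p (B (u + g) α)) ∈ SigmaF B V₀ f := by
  intro v hv
  have h1 := opt_aux h B V₀ g f w hw u hu hmin v hv
  have h2 := opt_aux h B V₀ g f w hw u hu hmin (-v) (V₀.neg_mem hv)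
  simp only [map_neg, Pi.neg_apply, mul_neg, Finset.sum_neg_distrib] at h2
  exact le_antisymm (by simpa using h2) h1

theorem perp {N M : ℕ} {B : (Fin N → ℝ) →ₗ[ℝ] (Fin M → ℝ)} {V₀ : Submodule ℝ (Fin N → ℝ)}
    {f : Fin N → ℝ} {σ τ : Fin M → ℝ} (hσ : σ ∈ SigmaF B V₀ f) (hτ : τ ∈ SigmaF B V₀ f)
    {v : Fin N → ℝ} (hv : v ∈ V₀) : ∑ α, (σ α - τ α) * B v α = 0 := by
  simp only [sub_mul, Finset.sum_sub_distrib]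
  rw [hσ v hv, hτ v hv, sub_self]

/-- dual energy gap as a sum of primal Bregman distances -/
theorem gap {c C : ℝ} {F p : ℝ → ℝ} (h : PHyp c C F p) {N M : ℕ}
    (B : (Fin N → ℝ) →ₗ[ℝ] (Fin M → ℝ)) (V₀ : Submodule ℝ (Fin N → ℝ))
    (g f : Fin N → ℝ) (w : Fin M → ℝ) (hw : ∀ α, 0 < w α) (u : Fin N → ℝ) (hu : u ∈ V₀)
    (σ z : Fin M → ℝ) (hσ : σ ∈ SigmaF B V₀ f) (hz : ∀ α, σ α = w α * sA p (z α))
    (hs : (fun α => w α * sA p (B (u + g) α)) ∈ SigmaF B V₀ f) :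
    dualJ w (fenchelConj F) B g σ
      - dualJ w (fenchelConj F) B g (fun α => w α * sA p (B (u + g) α))
    = ∑ α, w α * (F |B (u + g) α| - F |z α| - sA p (z α) * (B (u + g) α - z α)) := by
  have hp := perp hσ hs hu
  have hc : ∀ α t, fenchelConj F ((w α)⁻¹ * |w α * sA p t|) = sA p t * t - F |t| := by
    intro α t
    have := hw α
    rw [abs_mul, abs_of_pos this, inv_mul_cancel_left₀ this.ne', h.abs_sA, h.conj (abs_nonneg t),
      h.sA_mul]
  unfold dualJ
  simp only [hz, hc] at hp ⊢
  rw [← sub_zero (_ - _), ← hp]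
  simp only [← Finset.sum_sub_distrib]
  apply Finset.sum_congr rfl
  intro α _
  simp only [map_add, Pi.add_apply]
  ring

/-- convergence of the primal variable in the natural distance.
With `zⁿ_α = A_{φ*}(w_α⁻¹σⁿ_α)` and `u_g^{n+1} = uⁿ⁺¹ + g`, there is a constant
`C` depending only on the uniform convexity constants of `φ` with
`Σ_α w_α|V_φ((Bu_g)_α) − V_φ(zⁿ_α)|² + Σ_α w_α (φ'(|zⁿ_α|)/|zⁿ_α|)|zⁿ_α − (Bu_g^{n+1})_α|²
  ≤ C (J*(σⁿ) − J*(σ))`. -/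
theorem primal_natural_distance_convergence (c₁ C₁ : ℝ) (hc₁ : 0 < c₁) (hc₁C₁ : c₁ ≤ C₁) :
    ∃ C : ℝ, 0 < C ∧
    ∀ (φ φ' : ℝ → ℝ), IsNFunction φ φ' →
    (∀ t s : ℝ, 0 ≤ t → t < s →
      c₁ * (φ' s / s) ≤ (φ' t - φ' s) / (t - s) ∧
      (φ' t - φ' s) / (t - s) ≤ C₁ * (φ' s / s)) →
    (∀ t T : ℝ, 0 < t → t ≤ T → φ' t / t ≤ φ' T / T) →
    ∀ (N M : ℕ) (B : (Fin N → ℝ) →ₗ[ℝ] (Fin M → ℝ)) (V₀ : Submodule ℝ (Fin N → ℝ)),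
    (∀ v ∈ V₀, B v = 0 → v = 0) →
    ∀ (g f : Fin N → ℝ) (w : Fin M → ℝ), (∀ α, 0 < w α) →
    ∀ (L : Fin M → ℝ),
    (∀ α, Tendsto (fun t : ℝ => rcInv φ' ((w α)⁻¹ * t) / t)
      (nhdsWithin 0 (Set.Ioi 0)) (nhds (L α))) →
    ∀ (u : Fin N → ℝ), u ∈ V₀ →
    (∀ v ∈ V₀, primalJ w φ B f (u + g) ≤ primalJ w φ B f (v + g)) →
    ∀ σmin ∈ SigmaF B V₀ f,
    (∀ τ ∈ SigmaF B V₀ f,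
      dualJ w (fenchelConj φ) B g σmin ≤ dualJ w (fenchelConj φ) B g τ) →
    ∀ (σn σn1 : Fin M → ℝ) (un1 : Fin N → ℝ),
    σn ∈ SigmaF B V₀ f → σn1 ∈ SigmaF B V₀ f → un1 ∈ V₀ →
    (∀ τ : Fin M → ℝ,
      (∑ α, quotW φ' (w α) (L α) (σn α) * σn1 α * τ α)
        - (∑ α, τ α * B (un1 + g) α) = 0) →
    (∀ v ∈ V₀, (∑ α, σn1 α * B v α) = ∑ i, f i * v i) →
    (∑ α, w α * |Vphi φ' (B (u + g) α)
        - Vphi φ' (Aphi (rcInv φ') ((w α)⁻¹ * σn α))| ^ 2)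
      + (∑ α, w α * (φ' (|Aphi (rcInv φ') ((w α)⁻¹ * σn α)|)
            / |Aphi (rcInv φ') ((w α)⁻¹ * σn α)|)
          * |Aphi (rcInv φ') ((w α)⁻¹ * σn α) - B (un1 + g) α| ^ 2)
      ≤ C * (dualJ w (fenchelConj φ) B g σn - dualJ w (fenchelConj φ) B g σmin) := by
  have hC₁ : 0 < C₁ := by linarith
  refine ⟨((1 + C₁) ^ 2 + 3) / (c₁ ^ 2 / (16 * C₁)), by positivity, ?_⟩
  intro φ φ' hN hUC hk N M B V₀ _ g f w hw L hL u hu hmin σmin _ hσmin σn σn1 un1 hσn hσn1 hun1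
    hsys _
  have h := PHyp.of hc₁ hc₁C₁ hN hUC hk
  have hs := opt h B V₀ g f w hw u hu hmin
  set y : Fin M → ℝ := fun α => B (u + g) α with hy
  set z : Fin M → ℝ := fun α => Aphi (rcInv φ') ((w α)⁻¹ * σn α) with hz
  set x : Fin M → ℝ := fun α => B (un1 + g) α with hx
  have hzs : ∀ α, σn α = w α * sA φ' (z α) := by
    intro α
    have := hw α
    rw [hz]
    simp only
    rw [(h.sA_surj _).1]; field_simp
  have hgap := gap h B V₀ g f w hw u hu σn z hσn hzs hs
  have hmin2 := hσmin _ hs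
  -- quadratic weights
  let k : Fin M → ℝ := fun α => φ' (max |y α| |z α|) / max |y α| |z α|
  let K : Fin M → ℝ := fun α => if z α = 0 then (L α)⁻¹ else w α * (φ' |z α| / |z α|)
  have hLpos : ∀ α, 0 < L α := by
    intro α
    have h1 := h.L_bound (hw α) (hL α) one_pos
    have h2 : 0 < w α * (φ' 1 / 1) := mul_pos (hw α) (by simpa using h.pos 1 one_pos)
    by_contra hneg
    push Not at hneg
    nlinarith
  have hKpos : ∀ α, 0 < K α := by
    intro α
    simp only [K]
    split_ifs with h0
    · exact inv_pos.2 (hLpos α)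
    · have h1 := abs_pos.2 h0
      have h2 := h.pos _ h1
      have := hw α
      positivity
  have hquot : ∀ α, quotW φ' (w α) (L α) (σn α) = (K α)⁻¹ := by
    intro α
    have hwα := hw α
    simp only [quotW, K]
    by_cases h0 : z α = 0
    · have : σn α = 0 := by
        rw [hzs, h0, h.sA_nonneg le_rfl, h.p0, mul_zero]
      rw [if_pos this, if_pos h0, inv_inv]
    · have hzp := abs_pos.2 h0
      have hpz := h.pos _ hzp
      have habs : |σn α| = w α * φ' |z α| := by
        rw [hzs, abs_mul, abs_of_pos hwα, h.abs_sA]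
      have : σn α ≠ 0 := by
        rw [← abs_pos, habs]; positivity
      rw [if_neg this, if_neg h0, habs, inv_mul_cancel_left₀ hwα.ne', h.inv hzp.le]
      field_simp
  have hxe : ∀ α, σn1 α = K α * x α := by
    intro α
    have := hsys (Pi.single α 1)
    simp only [Pi.single_apply, mul_ite, mul_one, mul_zero, ite_mul, one_mul, zero_mul,
      Finset.sum_ite_eq', Finset.mem_univ, if_true, hquot] at this
    have hK := hKpos α
    have h2 : x α = (K α)⁻¹ * σn1 α := by
      simp only [hx]; linarith
    rw [h2]; field_simp
  have hze : ∀ α, σn α = K α * z α := by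
    intro α
    rw [hzs]
    simp only [K]
    split_ifs with h0
    · rw [h0, h.sA_nonneg le_rfl, h.p0]; simp
    · rw [h.sA_eq h0]; ring
  have hperp : ∑ α, (σn1 α - σn α) * (x α - y α) = 0 := by
    have := perp hσn1 hσn (V₀.sub_mem hun1 hu)
    rw [← this]
    apply Finset.sum_congr rfl
    intro α _
    simp only [hx, hy, map_add, map_sub, Pi.add_apply, Pi.sub_apply]
    ring
  have hQ : ∑ α, K α * (x α - z α) ^ 2 ≤ ∑ α, K α * (y α - z α) ^ 2 := by
    have e : ∑ α, K α * (x α - z α) ^ 2 ≤ ∑ α, (K α * (y α - z α) ^ 2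
        + 2 * ((σn1 α - σn α) * (x α - y α))) := by
      apply Finset.sum_le_sum
      intro α _
      rw [hxe, hze]
      nlinarith [mul_nonneg (hKpos α).le (sq_nonneg (x α - y α))]
    rw [Finset.sum_add_distrib, ← Finset.mul_sum, hperp] at e
    linarith
  have hKk : ∀ α, K α * (y α - z α) ^ 2 ≤ w α * (k α * (y α - z α) ^ 2) := by
    intro α
    rw [← mul_assoc]
    simp only [K, k]
    split_ifs with h0
    · by_cases hy0 : y α = 0
      · rw [h0, hy0]; simp
      · have hm : 0 < max |y α| |z α| := lt_max_of_lt_left (abs_pos.2 hy0)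
        have h1 := h.L_bound (hw α) (hL α) hm
        have : (L α)⁻¹ ≤ w α * (φ' (max |y α| |z α|) / max |y α| |z α|) := by
          rw [inv_le_iff_one_le_mul₀ (hLpos α), mul_comm]; exact h1
        exact mul_le_mul_of_nonneg_right this (sq_nonneg _)
    · have := mul_le_mul_of_nonneg_left
        (h.k_mono0 (abs_nonneg (z α)) (le_max_right |y α| |z α|)) (hw α).le
      exact mul_le_mul_of_nonneg_right this (sq_nonneg _)
  have hsecond : ∑ α, w α * (φ' |z α| / |z α|) * |z α - x α| ^ 2
      ≤ ∑ α, w α * (k α * (y α - z α) ^ 2) := by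
    refine le_trans ?_ (hQ.trans (Finset.sum_le_sum fun α _ => hKk α))
    apply Finset.sum_le_sum
    intro α _
    rw [sq_abs, show (z α - x α) ^ 2 = (x α - z α) ^ 2 by ring]
    by_cases h0 : z α = 0
    · have := mul_nonneg (hKpos α).le (sq_nonneg (x α - z α))
      rw [show φ' |z α| / |z α| = 0 by rw [h0]; simp]
      simpa using this
    · simp only [K, if_neg h0]; exact le_rfl
  have hfirst : ∑ α, w α * |Vphi φ' (y α) - Vphi φ' (z α)| ^ 2
      ≤ ((1 + C₁) ^ 2 + 2) * ∑ α, w α * (k α * (y α - z α) ^ 2) := by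
    rw [Finset.mul_sum]
    apply Finset.sum_le_sum
    intro α _
    rw [sq_abs]
    have := mul_le_mul_of_nonneg_left (h.V_all (y α) (z α)) (hw α).le
    simp only [k]
    linarith
  have hbreg : (c₁ ^ 2 / (16 * C₁)) * ∑ α, w α * (k α * (y α - z α) ^ 2)
      ≤ dualJ w (fenchelConj φ) B g σn - dualJ w (fenchelConj φ) B g σmin := by
    refine le_trans ?_ (hgap.symm.le.trans (by linarith))
    rw [Finset.mul_sum]
    apply Finset.sum_le_sum
    intro α _
    have := mul_le_mul_of_nonneg_left (h.breg (y α) (z α)) (hw α).le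
    simp only [k]
    linarith
  have hq : 0 < c₁ ^ 2 / (16 * C₁) := by positivity
  refine le_trans (add_le_add hfirst hsecond) ?_
  set q := c₁ ^ 2 / (16 * C₁)
  set S := ∑ α, w α * (k α * (y α - z α) ^ 2)
  rw [div_mul_eq_mul_div, le_div_iff₀ hq]
  have : ((1 + C₁) ^ 2 + 3) * (q * S) ≤ ((1 + C₁) ^ 2 + 3) *
      (dualJ w (fenchelConj φ) B g σn - dualJ w (fenchelConj φ) B g σmin) :=
    mul_le_mul_of_nonneg_left hbreg (by positivity)
  linarith
end
end

section
/- Let φ be an N-function such that t ↦ φ'(t)/t is non-decreasing on (0,∞), and for a relaxation interval δ = [δ₋, δ₊] ⊂ (0,∞) let φ_δ be the shifted regularization and φ*_δ its Fenchel-type dual integrand. Then the regularization is pointwise monotone in δ: for nested intervals δ = [δ₋, δ₊] ⊆ Δ = [Δ₋, Δ₊] ⊂ (0,∞) (i.e. Δ₋ ≤ δ₋ ≤ δ₊ ≤ Δ₊) one has φ_δ(t) ≤ φ_Δ(t) and φ*_δ(t) ≥ φ*_Δ(t) for all t ≥ 0. Consequently, J_δ(v) ≤ J_Δ(v) for all v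 ∈ ℝᴺ and J*_δ(τ) ≥ J*_Δ(τ) for all τ ∈ ℝᴹ. -/
open Filter MeasureTheory Set Topology

noncomputable section

/-- Shifted regularization `φ_δ` for a relaxation interval `[δ₋, δ₊]`. -/
def phiDelta (φ φ' : ℝ → ℝ) (δm δp t : ℝ) : ℝ :=
  if t < δm then φ' δm / (2 * δm) * t ^ 2 + φ δm - δm / 2 * φ' δm
  else if t ≤ δp then φ t
  else φ' δp / (2 * δp) * t ^ 2 + φ δp - δp / 2 * φ' δp

/-- Derivative `φ_δ'(t) = t·(φ'(δ₋)/δ₋ ∨ (φ'(t)/t ∧ φ'(δ₊)/δ₊))` of the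
regularization. -/
def phiDeltaDeriv (φ' : ℝ → ℝ) (δm δp t : ℝ) : ℝ :=
  t * max (φ' δm / δm) (min (φ' t / t) (φ' δp / δp))

/-- Shifted dual integrand `φ*_δ(r) = ∫₀ʳ (φ_δ')⁻¹(s) ds − φ(δ₋) + (δ₋/2)φ'(δ₋)`. -/
def phiDeltaConj (φ φ' : ℝ → ℝ) (δm δp r : ℝ) : ℝ :=
  (∫ s in (0:ℝ)..r, rcInv (phiDeltaDeriv φ' δm δp) s) - φ δm + δm / 2 * φ' δm

section helpers

variable {φ φ' : ℝ → ℝ}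

theorem aux_bdd_s17 {h : ℝ → ℝ} {c : ℝ} (hc : 0 < c) (hlow : ∀ t, 0 ≤ t → c * t ≤ h t) (s : ℝ) :
    BddAbove {r : ℝ | 0 ≤ r ∧ h r ≤ s} := by
  refine ⟨s / c, ?_⟩
  rintro r ⟨hr, hs⟩
  rw [le_div_iff₀ hc]
  nlinarith [hlow r hr]

theorem aux_rcInv_mono {h : ℝ → ℝ} {c : ℝ} (hc : 0 < c) (hlow : ∀ t, 0 ≤ t → c * t ≤ h t)
    (h0 : h 0 = 0) : MonotoneOn (rcInv h) (Set.Ici 0) := by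
  intro s hs t ht hst
  refine csSup_le_csSup (aux_bdd_s17 hc hlow t) ⟨0, le_rfl, by rw [h0]; exact hs⟩ ?_
  rintro r ⟨hr, hrs⟩
  exact ⟨hr, hrs.trans hst⟩

theorem aux_intble {G : ℝ → ℝ} (hG : MonotoneOn G (Set.Ici 0)) {a b : ℝ} (ha : 0 ≤ a)
    (hb : 0 ≤ b) : IntervalIntegrable G volume a b := by
  apply MonotoneOn.intervalIntegrable
  refine hG.mono ?_
  intro x hx
  exact (le_min ha hb).trans hx.1

theorem aux_young {h : ℝ → ℝ} {c : ℝ} (hc : 0 < c) (hlow : ∀ t, 0 ≤ t → c * t ≤ h t)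
    (h0 : h 0 = 0) (hm : MonotoneOn h (Set.Ici 0)) {d : ℝ} (hd : 0 < d) :
    ∫ s in (0:ℝ)..(h d), rcInv h s ≤ d * h d - ∫ t in (0:ℝ)..d, h t := by
  have hnn : ∀ t, 0 ≤ t → 0 ≤ h t := fun t ht => le_trans (by positivity) (hlow t ht)
  have hr0 : 0 ≤ h d := hnn d hd.le
  have hint : IntervalIntegrable h volume 0 d := aux_intble hm le_rfl hd.le
  have hint' : Integrable (fun t => h d - h t) (volume.restrict (Ioc 0 d)) :=
    ((intervalIntegrable_const.sub hint).1)
  have e1 : d * h d - ∫ t in (0:ℝ)..d, h t = ∫ t in Ioc 0 d, (h d - h t) := by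
    rw [← intervalIntegral.integral_of_le hd.le, intervalIntegral.integral_sub
      intervalIntegrable_const hint]
    simp
  have nn : 0 ≤ᵐ[volume.restrict (Ioc 0 d)] (fun t => h d - h t) := by
    filter_upwards [ae_restrict_mem measurableSet_Ioc] with t ht
    exact sub_nonneg.2 (hm ht.1.le hd.le ht.2)
  have bd : (fun t => h d - h t) ≤ᵐ[volume.restrict (Ioc 0 d)] (fun _ => h d) := by
    filter_upwards [ae_restrict_mem measurableSet_Ioc] with t ht
    have := hnn t ht.1.le
    linarith
  have e2 := Integrable.integral_eq_integral_Ioc_meas_le hint' nn bd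
  rw [e1, e2, ← intervalIntegral.integral_of_le hr0]
  have e3 : ∫ s in (0:ℝ)..(h d), rcInv h s = ∫ u in (0:ℝ)..(h d), rcInv h (h d - u) := by
    rw [intervalIntegral.integral_comp_sub_left]
    simp
  rw [e3]
  have hGm := aux_rcInv_mono hc hlow h0
  have hanti : Antitone (fun u => (volume.restrict (Ioc 0 d)).real {a | u ≤ h d - h a}) := by
    intro u v huv
    apply measureReal_mono
    · intro a ha
      exact huv.trans ha
    · exact measure_ne_top _ _
  apply intervalIntegral.integral_mono_on_of_le_Ioo hr0
  · have := (aux_intble hGm hr0 le_rfl).comp_sub_left (h d)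
    simpa using this
  · exact hanti.intervalIntegrable
  · intro u hu
    have hs : 0 < h d - u := by linarith [hu.2]
    have hne : ({r : ℝ | 0 ≤ r ∧ h r ≤ h d - u}).Nonempty := ⟨0, le_rfl, by rw [h0]; exact hs.le⟩
    have hb := aux_bdd_s17 hc hlow (h d - u)
    have hG0 : 0 ≤ rcInv h (h d - u) := le_csSup hb ⟨le_rfl, by rw [h0]; exact hs.le⟩
    have hGd : rcInv h (h d - u) ≤ d := by
      apply csSup_le hne
      rintro r ⟨hr, hrs⟩
      by_contra hcon
      have := hm hd.le hr (not_le.1 hcon).le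
      linarith [hu.1]
    have hsub : Ioo 0 (rcInv h (h d - u)) ⊆ {a | u ≤ h d - h a} := by
      intro x hx
      obtain ⟨r, hr, hxr⟩ := exists_lt_of_lt_csSup hne hx.2
      have := hm hx.1.le hr.1 hxr.le
      have h2 := hr.2
      show u ≤ h d - h x
      linarith
    calc rcInv h (h d - u)
        = (volume.restrict (Ioc 0 d)).real (Ioo 0 (rcInv h (h d - u))) := by
          rw [measureReal_restrict_apply measurableSet_Ioo, inter_eq_left.2]
          · simp [hG0]
          · intro x hx
            exact ⟨hx.1, hx.2.le.trans hGd⟩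
      _ ≤ _ := measureReal_mono hsub (measure_ne_top _ _)

theorem aux_sub (hφ : IsNFunction φ φ') {x y : ℝ} (hx : 0 ≤ x) (hy : 0 ≤ y) :
    φ y - φ x = ∫ s in x..y, φ' s := by
  rw [hφ.eq_integral x hx, hφ.eq_integral y hy]
  exact intervalIntegral.integral_interval_sub_left
    (aux_intble hφ.deriv_monotoneOn le_rfl hy) (aux_intble hφ.deriv_monotoneOn le_rfl hx)

theorem aux_lin (c x y : ℝ) : ∫ s in x..y, s * c = c / 2 * (y ^ 2 - x ^ 2) := by
  rw [intervalIntegral.integral_mul_const, integral_id]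
  ring

theorem aux_quad (hφ : IsNFunction φ φ')
    (hmono : ∀ t T : ℝ, 0 < t → t ≤ T → φ' t / t ≤ φ' T / T) {x t : ℝ} (hx : 0 < x)
    (ht : 0 ≤ t) : φ' x / x / 2 * (t ^ 2 - x ^ 2) + φ x ≤ φ t := by
  have hlin : ∀ a b : ℝ, IntervalIntegrable (fun s => s * (φ' x / x)) volume a b :=
    fun a b => (by fun_prop : Continuous (fun s => s * (φ' x / x))).intervalIntegrable a b
  rcases le_total t x with h | h
  · have h1 := aux_sub hφ ht hx.le
    have h2 : ∫ s in t..x, φ' s ≤ ∫ s in t..x, s * (φ' x / x) := by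
      apply intervalIntegral.integral_mono_on_of_le_Ioo h
        (aux_intble hφ.deriv_monotoneOn ht hx.le) (hlin _ _)
      intro s hs
      have h0 : 0 < s := ht.trans_lt hs.1
      have := hmono s x h0 hs.2.le
      rw [div_le_iff₀ h0] at this
      linarith
    rw [aux_lin] at h2
    linarith
  · have h1 := aux_sub hφ hx.le ht
    have h2 : ∫ s in x..t, s * (φ' x / x) ≤ ∫ s in x..t, φ' s := by
      apply intervalIntegral.integral_mono_on_of_le_Ioo h (hlin _ _)
        (aux_intble hφ.deriv_monotoneOn hx.le ht)
      intro s hs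
      have h0 : 0 < s := hx.trans hs.1
      have := hmono x s hx hs.1.le
      rw [le_div_iff₀ h0] at this
      linarith
    rw [aux_lin] at h2
    linarith

theorem aux_phi_eq {x : ℝ} (hx : 0 < x) (t : ℝ) :
    φ' x / (2 * x) * t ^ 2 + φ x - x / 2 * φ' x
      = φ' x / x / 2 * (t ^ 2 - x ^ 2) + φ x := by
  field_simp
  ring

theorem aux_primal (hφ : IsNFunction φ φ')
    (hmono : ∀ t T : ℝ, 0 < t → t ≤ T → φ' t / t ≤ φ' T / T)
    {δm δp Δm Δp : ℝ} (hΔm : 0 < Δm) (hΔmδm : Δm ≤ δm) (hδ : δm ≤ δp) (hδpΔp : δp ≤ Δp)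
    {t : ℝ} (ht : 0 ≤ t) : phiDelta φ φ' δm δp t ≤ phiDelta φ φ' Δm Δp t := by
  have hδm : 0 < δm := hΔm.trans_le hΔmδm
  have hδp : 0 < δp := hδm.trans_le hδ
  have hΔp : 0 < Δp := hδp.trans_le hδpΔp
  unfold phiDelta
  rw [aux_phi_eq hδm, aux_phi_eq hδp, aux_phi_eq hΔm, aux_phi_eq hΔp]
  have q1 := aux_quad hφ hmono hδm ht
  have q2 := aux_quad hφ hmono hδp ht
  split_ifs with h1 h2 h3 h4 h5 h6 h7 h8
  all_goals first
    | linarith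
    | skip
  · have a := aux_quad hφ hmono hδm hΔm.le
    have b := hmono Δm δm hΔm hΔmδm
    nlinarith [mul_nonneg (sub_nonneg.2 b) (by nlinarith : 0 ≤ Δm ^ 2 - t ^ 2)]
  · have a := aux_quad hφ hmono hδp hΔp.le
    have b := hmono δp Δp hδp hδpΔp
    have : Δp < t := by linarith
    nlinarith [mul_nonneg (sub_nonneg.2 b) (by nlinarith : 0 ≤ t ^ 2 - Δp ^ 2)]

theorem aux_D_zero (x y : ℝ) : phiDeltaDeriv φ' x y 0 = 0 := by simp [phiDeltaDeriv]

theorem aux_D_low {x y t : ℝ} (ht : 0 ≤ t) : φ' x / x * t ≤ phiDeltaDeriv φ' x y t := by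
  unfold phiDeltaDeriv
  rw [mul_comm]
  exact mul_le_mul_of_nonneg_left (le_max_left _ _) ht

theorem aux_D_mono (hφ : IsNFunction φ φ')
    (hmono : ∀ t T : ℝ, 0 < t → t ≤ T → φ' t / t ≤ φ' T / T) {x y : ℝ} (hx : 0 < x) :
    MonotoneOn (phiDeltaDeriv φ' x y) (Set.Ici 0) := by
  have hc : 0 < φ' x / x := div_pos (hφ.deriv_pos x hx) hx
  intro t ht T hT htT
  have hT' : (0:ℝ) ≤ T := hT
  rcases (show (0:ℝ) ≤ t from ht).eq_or_lt with h | h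
  · rw [← h, aux_D_zero]
    exact le_trans (by positivity) (aux_D_low hT')
  · unfold phiDeltaDeriv
    have := hmono t T h htT
    apply mul_le_mul htT
    · exact max_le_max le_rfl (min_le_min this le_rfl)
    · exact hc.le.trans (le_max_left _ _)
    · exact hT'

theorem aux_D_left (hmono : ∀ t T : ℝ, 0 < t → t ≤ T → φ' t / t ≤ φ' T / T) {x y t : ℝ}
    (ht : 0 ≤ t) (htx : t ≤ x) : phiDeltaDeriv φ' x y t = t * (φ' x / x) := by
  rcases ht.eq_or_lt with h | h
  · rw [← h, aux_D_zero]; simp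
  · unfold phiDeltaDeriv
    rw [max_eq_left ((min_le_left _ _).trans (hmono t x h htx))]

theorem aux_D_mid (hmono : ∀ t T : ℝ, 0 < t → t ≤ T → φ' t / t ≤ φ' T / T) {x y t : ℝ}
    (hx : 0 < x) (hxt : x ≤ t) (hty : t ≤ y) : phiDeltaDeriv φ' x y t = φ' t := by
  have ht : 0 < t := hx.trans_le hxt
  unfold phiDeltaDeriv
  rw [min_eq_left (hmono t y ht hty), max_eq_right (hmono x t hx hxt)]
  field_simp

theorem aux_dual (hφ : IsNFunction φ φ')
    (hmono : ∀ t T : ℝ, 0 < t → t ≤ T → φ' t / t ≤ φ' T / T)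
    {δm δp Δm Δp : ℝ} (hΔm : 0 < Δm) (hΔmδm : Δm ≤ δm) (hδ : δm ≤ δp) (hδpΔp : δp ≤ Δp)
    {r : ℝ} (hr : 0 ≤ r) : phiDeltaConj φ φ' Δm Δp r ≤ phiDeltaConj φ φ' δm δp r := by
  have hδm : 0 < δm := hΔm.trans_le hΔmδm
  have hδp : 0 < δp := hδm.trans_le hδ
  have hΔp : 0 < Δp := hδp.trans_le hδpΔp
  have hc : 0 < φ' δm / δm := div_pos (hφ.deriv_pos _ hδm) hδm
  have hC : 0 < φ' Δm / Δm := div_pos (hφ.deriv_pos _ hΔm) hΔm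
  have hr0 : 0 < φ' δm := hφ.deriv_pos _ hδm
  set d := phiDeltaDeriv φ' δm δp with hd
  set D := phiDeltaDeriv φ' Δm Δp with hD
  have dlow : ∀ t, 0 ≤ t → φ' δm / δm * t ≤ d t := fun t ht => aux_D_low ht
  have Dlow : ∀ t, 0 ≤ t → φ' Δm / Δm * t ≤ D t := fun t ht => aux_D_low ht
  have d0 : d 0 = 0 := aux_D_zero _ _
  have D0 : D 0 = 0 := aux_D_zero _ _
  have dm : MonotoneOn d (Set.Ici 0) := aux_D_mono hφ hmono hδm
  have Dm : MonotoneOn D (Set.Ici 0) := aux_D_mono hφ hmono hΔm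
  have gm := aux_rcInv_mono hc dlow d0
  have Gm := aux_rcInv_mono hC Dlow D0
  have dδ : d δm = φ' δm := aux_D_mid hmono hδm le_rfl hδ
  have Dδ : D δm = φ' δm := aux_D_mid hmono hΔm hΔmδm (hδ.trans hδpΔp)
  have cmp1 : ∀ t, 0 ≤ t → t ≤ δm → D t ≤ d t := by
    intro t ht htd
    rcases ht.eq_or_lt with h | h
    · rw [← h, d0, D0]
    · rw [hd, aux_D_left hmono ht htd, hD]
      unfold phiDeltaDeriv
      exact mul_le_mul_of_nonneg_left (max_le (hmono _ _ hΔm hΔmδm)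
        ((min_le_left _ _).trans (hmono _ _ h htd))) ht
  have cmp2 : ∀ t, δm ≤ t → d t ≤ D t := by
    intro t ht
    have h0 : 0 < t := hδm.trans_le ht
    rw [hd, hD]
    unfold phiDeltaDeriv
    refine mul_le_mul_of_nonneg_left ?_ h0.le
    have b := hmono δp Δp hδp hδpΔp
    refine (max_le ?_ (min_le_min le_rfl b)).trans (le_max_right _ _)
    exact le_min (hmono _ _ hδm ht) ((hmono _ _ hδm hδ).trans b)
  have G1 : ∀ s, 0 ≤ s → s < φ' δm → rcInv d s ≤ rcInv D s := by
    intro s hs hsr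
    refine csSup_le_csSup (aux_bdd_s17 hC Dlow s) ⟨0, le_rfl, by rw [d0]; exact hs⟩ ?_
    rintro t ⟨ht, hts⟩
    refine ⟨ht, (cmp1 t ht ?_).trans hts⟩
    by_contra hcon
    have := dm hδm.le ht (not_le.1 hcon).le
    linarith
  have G2 : ∀ s, φ' δm ≤ s → rcInv D s ≤ rcInv d s := by
    intro s hs
    refine csSup_le ⟨0, le_rfl, by rw [D0]; linarith⟩ ?_
    rintro t ⟨ht, hts⟩
    have hb := aux_bdd_s17 hc dlow s
    rcases le_total δm t with h | h
    · exact le_csSup hb ⟨ht, (cmp2 t h).trans hts⟩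
    · exact h.trans (le_csSup hb ⟨hδm.le, by rw [dδ]; exact hs⟩)
  -- value at the touching point
  have low : δm / 2 * φ' δm ≤ ∫ s in (0:ℝ)..(φ' δm), rcInv d s := by
    have : ∫ s in (0:ℝ)..(φ' δm), s * (δm / φ' δm) ≤ ∫ s in (0:ℝ)..(φ' δm), rcInv d s := by
      apply intervalIntegral.integral_mono_on_of_le_Ioo hr0.le
      · exact (by fun_prop : Continuous (fun s => s * (δm / φ' δm))).intervalIntegrable _ _
      · exact aux_intble gm le_rfl hr0.le
      · intro s hs
        have hs0 := hs.1
        have h1 : s * (δm / φ' δm) ≤ δm := by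
          rw [← mul_div_assoc, div_le_iff₀ hr0]
          nlinarith [hs.2]
        refine le_csSup (aux_bdd_s17 hc dlow s) ⟨by positivity, ?_⟩
        rw [hd, aux_D_left hmono (by positivity) h1]
        apply le_of_eq
        field_simp
    rw [aux_lin] at this
    have e : δm / φ' δm / 2 * (φ' δm ^ 2 - 0 ^ 2) = δm / 2 * φ' δm := by
      field_simp
      ring
    linarith
  have up := aux_young hC Dlow D0 Dm hδm
  rw [Dδ] at up
  have HD : ∫ t in (0:ℝ)..δm, D t = φ δm - φ Δm + Δm / 2 * φ' Δm := by
    rw [← intervalIntegral.integral_add_adjacent_intervals (aux_intble Dm le_rfl hΔm.le)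
      (aux_intble Dm hΔm.le hδm.le)]
    have e1 : ∫ t in (0:ℝ)..Δm, D t = ∫ t in (0:ℝ)..Δm, t * (φ' Δm / Δm) := by
      apply intervalIntegral.integral_congr
      intro t ht
      rw [uIcc_of_le hΔm.le] at ht
      exact aux_D_left hmono ht.1 ht.2
    have e2 : ∫ t in Δm..δm, D t = ∫ t in Δm..δm, φ' t := by
      apply intervalIntegral.integral_congr
      intro t ht
      rw [uIcc_of_le hΔmδm] at ht
      exact aux_D_mid hmono hΔm ht.1 (ht.2.trans (hδ.trans hδpΔp))
    rw [e1, e2, aux_lin, ← aux_sub hφ hΔm.le hδm.le]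
    field_simp
    ring
  have sg := intervalIntegral.integral_add_adjacent_intervals
    (aux_intble gm le_rfl hr0.le) (aux_intble gm hr0.le hr)
  have sG := intervalIntegral.integral_add_adjacent_intervals
    (aux_intble Gm le_rfl hr0.le) (aux_intble Gm hr0.le hr)
  have key : ∫ s in (φ' δm)..r, rcInv D s ≤ ∫ s in (φ' δm)..r, rcInv d s := by
    rcases le_total (φ' δm) r with h | h
    · apply intervalIntegral.integral_mono_on_of_le_Ioo h (aux_intble Gm hr0.le hr)
        (aux_intble gm hr0.le hr)
      intro s hs
      exact G2 s hs.1.le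
    · rw [intervalIntegral.integral_symm r, intervalIntegral.integral_symm r]
      apply neg_le_neg
      apply intervalIntegral.integral_mono_on_of_le_Ioo h (aux_intble gm hr hr0.le)
        (aux_intble Gm hr hr0.le)
      intro s hs
      exact G1 s (hr.trans hs.1.le) hs.2
  unfold phiDeltaConj
  linarith

end helpers

/-- monotonicity of the regularization in the relaxation interval:
for nested intervals `[δ₋,δ₊] ⊆ [Δ₋,Δ₊] ⊂ (0,∞)` one has `φ_δ ≤ φ_Δ` and
`φ*_δ ≥ φ*_Δ` pointwise, hence `J_δ ≤ J_Δ` and `J*_δ ≥ J*_Δ`. -/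
theorem regularization_monotone {N M : ℕ} (φ φ' : ℝ → ℝ) (hφ : IsNFunction φ φ')
    (hmono : ∀ t T : ℝ, 0 < t → t ≤ T → φ' t / t ≤ φ' T / T)
    (δm δp Δm Δp : ℝ) (hΔm : 0 < Δm) (hΔmδm : Δm ≤ δm) (hδ : δm ≤ δp) (hδpΔp : δp ≤ Δp)
    (B : (Fin N → ℝ) →ₗ[ℝ] (Fin M → ℝ)) (f g : Fin N → ℝ)
    (w : Fin M → ℝ) (hw : ∀ α, 0 < w α) :
    (∀ t : ℝ, 0 ≤ t → phiDelta φ φ' δm δp t ≤ phiDelta φ φ' Δm Δp t) ∧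
    (∀ t : ℝ, 0 ≤ t → phiDeltaConj φ φ' Δm Δp t ≤ phiDeltaConj φ φ' δm δp t) ∧
    (∀ v : Fin N → ℝ,
      primalJ w (phiDelta φ φ' δm δp) B f v ≤ primalJ w (phiDelta φ φ' Δm Δp) B f v) ∧
    (∀ τ : Fin M → ℝ,
      dualJ w (phiDeltaConj φ φ' Δm Δp) B g τ ≤ dualJ w (phiDeltaConj φ φ' δm δp) B g τ) := by
  have P := fun (t : ℝ) (ht : 0 ≤ t) => aux_primal hφ hmono hΔm hΔmδm hδ hδpΔp ht
  have Q := fun (t : ℝ) (ht : 0 ≤ t) => aux_dual hφ hmono hΔm hΔmδm hδ hδpΔp ht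
  refine ⟨P, Q, ?_, ?_⟩
  · intro v
    unfold primalJ
    refine sub_le_sub_right (Finset.sum_le_sum fun α _ => ?_) _
    exact mul_le_mul_of_nonneg_left (P _ (abs_nonneg _)) (hw α).le
  · intro τ
    unfold dualJ
    refine sub_le_sub_right (Finset.sum_le_sum fun α _ => ?_) _
    exact mul_le_mul_of_nonneg_left
      (Q _ (mul_nonneg (inv_nonneg.2 (hw α).le) (abs_nonneg _))) (hw α).le
end
end

section
/- Let φ be an N-function such that t ↦ φ'(t)/t is non-decreasing on (0,∞), let δ = [δ₋, δ₊] ⊂ (0,∞) with 0 < δ₋ ≤ δ₊ < ∞, and let φ_δ be the shifted regularization with primal regularization error e_δ(t) := φ(t) − φ_δ(t). Then for all t ≥ 0 one has 0 ≤ e_δ(t), and moreover e_δ(t) ≤ (1/2)δ₋φ'(δ₋) − φ(δ₋) for t ∈ [0, δ₋), e_δ(t) = 0 for t ∈ [δ₋, δ₊], and e_δ(t) ≤ φ(t) − φ(δ₊) for t ∈ (δ₊, ∞). -/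
open Filter MeasureTheory Set Topology

noncomputable section

theorem nf_sub_eq (φ φ' : ℝ → ℝ) (hφ : IsNFunction φ φ') (a b : ℝ) (ha : 0 ≤ a) (hab : a ≤ b) :
    IntervalIntegrable φ' volume a b ∧ φ b - φ a = ∫ s in a..b, φ' s := by
  have hint : ∀ x y : ℝ, 0 ≤ x → x ≤ y → IntervalIntegrable φ' volume x y := by
    intro x y hx hxy
    apply MonotoneOn.intervalIntegrable
    apply hφ.deriv_monotoneOn.mono
    rw [uIcc_of_le hxy]
    intro z hz
    exact hx.trans hz.1
  refine ⟨hint a b ha hab, ?_⟩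
  rw [hφ.eq_integral a ha, hφ.eq_integral b (ha.trans hab)]
  exact intervalIntegral.integral_interval_sub_left (hint 0 b le_rfl (ha.trans hab))
    (hint 0 a le_rfl ha)

theorem nf_upper (φ φ' : ℝ → ℝ) (hφ : IsNFunction φ φ') (a b c : ℝ) (ha : 0 ≤ a) (hab : a ≤ b)
    (h : ∀ s ∈ Icc a b, φ' s ≤ c * s) : φ b - φ a ≤ c * ((b ^ 2 - a ^ 2) / 2) := by
  obtain ⟨hi, he⟩ := nf_sub_eq φ φ' hφ a b ha hab
  have h1 := intervalIntegral.integral_mono_on hab hi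
    ((continuous_const.mul continuous_id).intervalIntegrable (μ := volume) a b) h
  rw [he]
  have e : ∫ u in a..b, c * u = c * ((b ^ 2 - a ^ 2) / 2) := by
    rw [intervalIntegral.integral_const_mul, integral_id]
  rw [← e]
  exact h1

theorem nf_lower (φ φ' : ℝ → ℝ) (hφ : IsNFunction φ φ') (a b c : ℝ) (ha : 0 ≤ a) (hab : a ≤ b)
    (h : ∀ s ∈ Icc a b, c * s ≤ φ' s) : c * ((b ^ 2 - a ^ 2) / 2) ≤ φ b - φ a := by
  obtain ⟨hi, he⟩ := nf_sub_eq φ φ' hφ a b ha hab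
  have h1 := intervalIntegral.integral_mono_on hab
    ((continuous_const.mul continuous_id).intervalIntegrable (μ := volume) a b) hi h
  rw [he]
  have e : ∫ u in a..b, c * u = c * ((b ^ 2 - a ^ 2) / 2) := by
    rw [intervalIntegral.integral_const_mul, integral_id]
  rw [← e]
  exact h1

/-- pointwise primal regularization error bounds for
`e_δ(t) = φ(t) − φ_δ(t)`. -/
theorem primal_regularization_error (φ φ' : ℝ → ℝ) (hφ : IsNFunction φ φ')
    (hmono : ∀ t T : ℝ, 0 < t → t ≤ T → φ' t / t ≤ φ' T / T)
    (δm δp : ℝ) (hδm : 0 < δm) (hδ : δm ≤ δp) :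
    ∀ t : ℝ, 0 ≤ t →
      0 ≤ φ t - phiDelta φ φ' δm δp t ∧
      (t < δm → φ t - phiDelta φ φ' δm δp t ≤ δm / 2 * φ' δm - φ δm) ∧
      (δm ≤ t → t ≤ δp → φ t - phiDelta φ φ' δm δp t = 0) ∧
      (δp < t → φ t - phiDelta φ φ' δm δp t ≤ φ t - φ δp) := by
  intro t ht
  have hδp : 0 < δp := hδm.trans_le hδ
  have up : ∀ d s : ℝ, 0 < d → 0 ≤ s → s ≤ d → φ' s ≤ φ' d / d * s := by
    intro d s hd hs hsd
    rcases hs.eq_or_lt with rfl | hs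
    · simp [hφ.deriv_zero]
    · exact (div_le_iff₀ hs).1 (hmono s d hs hsd)
  have lo : ∀ d s : ℝ, 0 < d → d ≤ s → φ' d / d * s ≤ φ' s := by
    intro d s hd hsd
    exact (le_div_iff₀ (hd.trans_le hsd)).1 (hmono d s hd hsd)
  have z0 : φ 0 = 0 := by simpa using hφ.eq_integral 0 le_rfl
  unfold phiDelta
  rcases lt_or_ge t δm with h | h
  · have e1 : φ' δm / (2 * δm) * t ^ 2 = φ' δm / δm * (t ^ 2 / 2) := by field_simp
    have e2 : δm / 2 * φ' δm = φ' δm / δm * (δm ^ 2 / 2) := by field_simp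
    have a1 := nf_upper φ φ' hφ t δm _ ht h.le (fun s hs => up δm s hδm (ht.trans hs.1) hs.2)
    have a2 := nf_upper φ φ' hφ 0 t _ le_rfl ht
      (fun s hs => up δm s hδm hs.1 (hs.2.trans h.le))
    simp only [h, if_true]
    rw [e1, e2]
    refine ⟨by linarith, fun _ => by linarith, fun h' => absurd h' (not_le.2 h),
      fun h' => by linarith⟩
  · rcases le_or_gt t δp with h2 | h2
    · simp only [not_lt.2 h, h2, if_true, if_false]
      simp [not_lt.2 h2]
    · have e1 : φ' δp / (2 * δp) * t ^ 2 = φ' δp / δp * (t ^ 2 / 2) := by field_simp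
      have e2 : δp / 2 * φ' δp = φ' δp / δp * (δp ^ 2 / 2) := by field_simp
      have a1 := nf_lower φ φ' hφ δp t _ hδp.le h2.le (fun s hs => lo δp s hδp hs.1)
      have c0 : 0 ≤ φ' δp / δp * ((t ^ 2 - δp ^ 2) / 2) :=
        mul_nonneg (div_nonneg (hφ.deriv_nonneg _ hδp.le) hδp.le) (by nlinarith)
      simp only [not_lt.2 h, not_le.2 h2, if_false]
      rw [e1, e2]
      refine ⟨by linarith, fun h' => h'.elim, fun _ h' => h'.elim, fun _ => by linarith⟩
end
end

section
/- Let φ be an N-function such that t ↦ φ'(t)/t is non-decreasing on (0,∞), let δ = [δ₋, δ₊] ⊂ (0,∞) with 0 < δ₋ ≤ δ₊ < ∞, let φ_δ be the shifted regularization, φ*_δ its dual integrand, and let the dual regularization error be e*_δ(t) := φ*_δ(t) − φ*(t), where φ* is the Fenchel conjugate of φ. Then for all t ≥ 0 one has 0 ≤ e*_δ(t), and moreover e*_δ(t) ≤ φ*(φ'(δ₋)) − (1/2)δ₋φ'(δ₋) for t ∈ [0, φ'(δ₋)), e*_δ(t) = 0 for t ∈ [φ'(δ₋), φ'(δ₊)],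 and e*_δ(t) ≤ (t² − φ'(δ₊)²)·δ₊/(2φ'(δ₊)) for t ∈ (φ'(δ₊), ∞). -/
open Filter MeasureTheory Set Topology

noncomputable section

/-- Shifted dual integrand `φ*_δ` in its explicit piecewise form. -/
def phiDeltaConjE (φ φ' : ℝ → ℝ) (δm δp r : ℝ) : ℝ :=
  if r < φ' δm then δm / (2 * φ' δm) * r ^ 2 - φ δm + δm / 2 * φ' δm
  else if r ≤ φ' δp then fenchelConj φ r
  else δp / (2 * φ' δp) * r ^ 2 - φ δp + δp / 2 * φ' δp

theorem nfun_quad (φ φ' : ℝ → ℝ) (hφ : IsNFunction φ φ')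
    (hmono : ∀ t T : ℝ, 0 < t → t ≤ T → φ' t / t ≤ φ' T / T)
    (d : ℝ) (hd : 0 < d) (s : ℝ) (hs : 0 ≤ s) :
    φ' d / d * ((s ^ 2 - d ^ 2) / 2) ≤ φ s - φ d := by
  have hint : ∀ x y : ℝ, 0 ≤ x → 0 ≤ y → IntervalIntegrable φ' volume x y := by
    intro x y hx hy
    apply MonotoneOn.intervalIntegrable
    apply hφ.deriv_monotoneOn.mono
    intro z hz
    exact le_trans (le_min hx hy) hz.1
  have e1 : φ s - φ d = ∫ u in d..s, φ' u := by
    rw [hφ.eq_integral s hs, hφ.eq_integral d hd.le]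
    exact intervalIntegral.integral_interval_sub_left (hint _ _ le_rfl hs) (hint _ _ le_rfl hd.le)
  have e2 : φ' d / d * ((s ^ 2 - d ^ 2) / 2) = ∫ u in d..s, φ' d / d * u := by
    rw [intervalIntegral.integral_const_mul, integral_id]
  have hI : ∀ x y : ℝ, IntervalIntegrable (fun u => φ' d / d * u) volume x y := fun x y =>
    (by fun_prop : Continuous (fun u => φ' d / d * u)).intervalIntegrable x y
  rw [e1, e2]
  rcases le_total d s with h | h
  · apply intervalIntegral.integral_mono_on h (hI _ _) (hint _ _ hd.le hs)
    intro x hx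
    have hx0 : 0 < x := lt_of_lt_of_le hd hx.1
    have := hmono d x hd hx.1
    rwa [le_div_iff₀ hx0] at this
  · rw [intervalIntegral.integral_symm s d, intervalIntegral.integral_symm s d]
    apply neg_le_neg
    apply intervalIntegral.integral_mono_on h (hint _ _ hs hd.le) (hI _ _)
    intro x hx
    rcases (le_trans hs hx.1).eq_or_lt with h0 | hx0
    · rw [← h0, hφ.deriv_zero]; simp
    have := hmono x d hx0 hx.2
    rwa [div_le_iff₀ hx0] at this

theorem nfun_young (φ φ' : ℝ → ℝ) (hφ : IsNFunction φ φ')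
    (hmono : ∀ t T : ℝ, 0 < t → t ≤ T → φ' t / t ≤ φ' T / T)
    (d : ℝ) (hd : 0 < d) (t s : ℝ) (hs : 0 ≤ s) :
    t * s - φ s ≤ d / (2 * φ' d) * t ^ 2 - φ d + d / 2 * φ' d := by
  have h := nfun_quad φ φ' hφ hmono d hd s hs
  have ha := hφ.deriv_pos d hd
  have key : d / (2 * φ' d) * t ^ 2 - φ d + d / 2 * φ' d - (t * s - φ s)
      = (φ s - φ d - φ' d / d * ((s ^ 2 - d ^ 2) / 2))
        + (d * t - φ' d * s) ^ 2 / (2 * φ' d * d) := by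
    field_simp
    ring
  have : 0 ≤ (d * t - φ' d * s) ^ 2 / (2 * φ' d * d) := by positivity
  linarith

theorem nfun_conj_le (φ φ' : ℝ → ℝ) (hφ : IsNFunction φ φ')
    (hmono : ∀ t T : ℝ, 0 < t → t ≤ T → φ' t / t ≤ φ' T / T)
    (d : ℝ) (hd : 0 < d) (t : ℝ) :
    fenchelConj φ t ≤ d / (2 * φ' d) * t ^ 2 - φ d + d / 2 * φ' d := by
  unfold fenchelConj
  refine csSup_le ⟨_, 0, le_rfl, rfl⟩ ?_
  rintro x ⟨s, hs, rfl⟩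
  exact nfun_young φ φ' hφ hmono d hd t s hs

theorem nfun_le_conj (φ φ' : ℝ → ℝ) (hφ : IsNFunction φ φ')
    (hmono : ∀ t T : ℝ, 0 < t → t ≤ T → φ' t / t ≤ φ' T / T)
    (t s : ℝ) (hs : 0 ≤ s) : t * s - φ s ≤ fenchelConj φ t := by
  unfold fenchelConj
  refine le_csSup ⟨1 / (2 * φ' 1) * t ^ 2 - φ 1 + 1 / 2 * φ' 1, ?_⟩ ⟨s, hs, rfl⟩
  rintro x ⟨r, hr, rfl⟩
  exact nfun_young φ φ' hφ hmono 1 one_pos t r hr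

/-- pointwise dual regularization error bounds for
`e*_δ(t) = φ*_δ(t) − φ*(t)`. -/
theorem dual_regularization_error (φ φ' : ℝ → ℝ) (hφ : IsNFunction φ φ')
    (hmono : ∀ t T : ℝ, 0 < t → t ≤ T → φ' t / t ≤ φ' T / T)
    (δm δp : ℝ) (hδm : 0 < δm) (hδ : δm ≤ δp) :
    ∀ t : ℝ, 0 ≤ t →
      0 ≤ phiDeltaConjE φ φ' δm δp t - fenchelConj φ t ∧
      (t < φ' δm → phiDeltaConjE φ φ' δm δp t - fenchelConj φ t ≤
        fenchelConj φ (φ' δm) - δm / 2 * φ' δm) ∧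
      (φ' δm ≤ t → t ≤ φ' δp → phiDeltaConjE φ φ' δm δp t - fenchelConj φ t = 0) ∧
      (φ' δp < t → phiDeltaConjE φ φ' δm δp t - fenchelConj φ t ≤
        (t ^ 2 - (φ' δp) ^ 2) * δp / (2 * φ' δp)) := by
  intro t ht
  have hdp : 0 < δp := lt_of_lt_of_le hδm hδ
  have ha := hφ.deriv_pos δm hδm
  have hb := hφ.deriv_pos δp hdp
  have hab : φ' δm ≤ φ' δp := hφ.deriv_monotoneOn hδm.le hdp.le hδ
  refine ⟨?_, ?_, ?_, ?_⟩
  · unfold phiDeltaConjE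
    split_ifs
    · exact sub_nonneg.2 (nfun_conj_le φ φ' hφ hmono δm hδm t)
    · simp
    · exact sub_nonneg.2 (nfun_conj_le φ φ' hφ hmono δp hdp t)
  · intro h
    unfold phiDeltaConjE
    rw [if_pos h]
    have h1 := nfun_le_conj φ φ' hφ hmono (φ' δm) δm hδm.le
    have h2 : δm / (2 * φ' δm) * t ^ 2 ≤ fenchelConj φ t := by
      have h00 : φ 0 = 0 := by rw [hφ.eq_integral 0 le_rfl]; simp
      rcases ht.eq_or_lt with h0 | h0
      · have := nfun_le_conj φ φ' hφ hmono t 0 le_rfl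
        rw [h00] at this
        rw [← h0] at this ⊢
        simpa using this
      · obtain ⟨s, hsdef⟩ : ∃ s, s = t * δm / φ' δm := ⟨_, rfl⟩
        have hs : 0 < s := by rw [hsdef]; positivity
        have hsd : s ≤ δm := by
          rw [hsdef, div_le_iff₀ ha]; nlinarith
        have h3 := nfun_le_conj φ φ' hφ hmono t s hs.le
        have h4 := nfun_quad φ φ' hφ hmono s hs 0 le_rfl
        have h5 := mul_le_mul_of_nonneg_right (hmono s δm hs hsd)
          (by positivity : 0 ≤ s ^ 2 / 2)
        have h6 : t * s - φ' δm / δm * (s ^ 2 / 2) = δm / (2 * φ' δm) * t ^ 2 := by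
          rw [hsdef]; field_simp; ring
        rw [h00] at h4
        linarith
    linarith
  · intro h1 h2
    unfold phiDeltaConjE
    rw [if_neg (not_lt.2 h1), if_pos h2, sub_self]
  · intro h
    unfold phiDeltaConjE
    rw [if_neg (not_lt.2 (hab.trans h.le)), if_neg (not_le.2 h)]
    have h1 := nfun_le_conj φ φ' hφ hmono t δp hdp.le
    have h2 : (t ^ 2 - (φ' δp) ^ 2) * δp / (2 * φ' δp)
        = δp / (2 * φ' δp) * t ^ 2 - δp / 2 * φ' δp := by
      field_simp
    nlinarith
end
end
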